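/- arXiv:1203.3074 — 13 statements merged into one kernel-verified Lean document; each statement's English description precedes it below -/
import Mathlib

section
/- Let f : [a,b] → ℝ be continuous on [a,b] and differentiable on (a,b), and assume |f′(x)| ≤ M for all x ∈ (a,b). Then for all x ∈ [a,b], |f(x) − (1/(b−a)) ∫_a^b f(t) dt| ≤ (M/(b−a)) [((b−a)/2)² + (x − (a+b)/2)²]. -/
open MeasureTheory Set intervalIntegral

/-- **Ostrowski's inequality.** If `f` is continuous on `[a,b]`, differentiable on `(a,b)`
with `|f'(x)| ≤ M` there, then for all `x ∈ [a,b]`,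
`|f(x) − (1/(b−a)) ∫_a^b f| ≤ (M/(b−a)) [((b−a)/2)² + (x − (a+b)/2)²]`. -/
theorem ostrowski_inequality (a b M : ℝ) (hab : a < b) (hM : 0 ≤ M)
    (f f' : ℝ → ℝ)
    (hcont : ContinuousOn f (Icc a b))
    (hderiv : ∀ x ∈ Ioo a b, HasDerivAt f (f' x) x)
    (hbound : ∀ x ∈ Ioo a b, |f' x| ≤ M) :
    ∀ x ∈ Icc a b,
      |f x - (1 / (b - a)) * ∫ t in a..b, f t| ≤
        (M / (b - a)) * (((b - a) / 2) ^ 2 + (x - (a + b) / 2) ^ 2) := by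
  intro x hx
  have key : ∀ s ∈ Icc a b, ∀ t ∈ Icc a b, s ≤ t → |f t - f s| ≤ M * (t - s) := by
    intro s hs t ht hst
    rcases hst.eq_or_lt with rfl | hlt
    · simp
    obtain ⟨c, hc, h⟩ := exists_hasDerivAt_eq_slope f f' hlt
      (hcont.mono (Icc_subset_Icc hs.1 ht.2))
      (fun y hy => hderiv y ⟨lt_of_le_of_lt hs.1 hy.1, lt_of_lt_of_le hy.2 ht.2⟩)
    have hb := hbound c ⟨lt_of_le_of_lt hs.1 hc.1, lt_of_lt_of_le hc.2 ht.2⟩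
    have hpos : 0 < t - s := sub_pos.2 hlt
    rw [h, abs_div, abs_of_pos hpos, div_le_iff₀ hpos] at hb
    exact hb
  obtain ⟨hax, hxb⟩ := hx
  have i1 : IntervalIntegrable f volume a x :=
    (hcont.mono (Icc_subset_Icc le_rfl hxb)).intervalIntegrable_of_Icc hax
  have i2 : IntervalIntegrable f volume x b :=
    (hcont.mono (Icc_subset_Icc hax le_rfl)).intervalIntegrable_of_Icc hxb
  have e1 : |∫ t in a..x, (f x - f t)| ≤ ∫ t in a..x, M * (x - t) := by
    rw [← Real.norm_eq_abs]
    refine intervalIntegral.norm_integral_le_of_norm_le hax ?_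
      (Continuous.intervalIntegrable (by fun_prop) _ _)
    refine Filter.Eventually.of_forall fun t ht => ?_
    exact key t ⟨ht.1.le, ht.2.trans hxb⟩ x ⟨hax, hxb⟩ ht.2
  have e2 : |∫ t in x..b, (f x - f t)| ≤ ∫ t in x..b, M * (t - x) := by
    rw [← Real.norm_eq_abs]
    refine intervalIntegral.norm_integral_le_of_norm_le hxb ?_
      (Continuous.intervalIntegrable (by fun_prop) _ _)
    refine Filter.Eventually.of_forall fun t ht => ?_
    rw [Real.norm_eq_abs, abs_sub_comm]
    exact key x ⟨hax, hxb⟩ t ⟨hax.trans ht.1.le, ht.2⟩ ht.1.le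
  have c1 : ∫ t in a..x, M * (x - t) = M * ((x - a) ^ 2 / 2) := by
    rw [intervalIntegral.integral_const_mul, intervalIntegral.integral_sub (by simp) (by simp)]
    simp
    left; ring
  have c2 : ∫ t in x..b, M * (t - x) = M * ((b - x) ^ 2 / 2) := by
    rw [intervalIntegral.integral_const_mul, intervalIntegral.integral_sub (by simp) (by simp)]
    simp
    left; ring
  rw [c1, intervalIntegral.integral_sub (by simp) i1, intervalIntegral.integral_const,
    smul_eq_mul] at e1
  rw [c2, intervalIntegral.integral_sub (by simp) i2, intervalIntegral.integral_const,
    smul_eq_mul] at e2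
  rw [← intervalIntegral.integral_add_adjacent_intervals i1 i2]
  have hpos : 0 < b - a := sub_pos.2 hab
  generalize (∫ t in a..x, f t) = I at *
  generalize (∫ t in x..b, f t) = J at *
  have h1 : f x - 1 / (b - a) * (I + J) =
      (((x - a) * f x - I) + ((b - x) * f x - J)) / (b - a) := by
    field_simp
    ring
  rw [h1, abs_div, abs_of_pos hpos, div_mul_eq_mul_div]
  refine div_le_div_of_nonneg_right ?_ hpos.le
  refine (abs_add_le _ _).trans ((add_le_add e1 e2).trans (le_of_eq ?_))
  ring
end

section
/- Let f, g : [a,b] → ℝ be absolutely continuous functions whose first derivatives f′ and g′ are (essentially) bounded. Then |T(f,g)| ≤ (1/12)(b−a)² ‖f′‖_∞ ‖g′‖_∞, where T(f,g) = (1/(b−a)) ∫_a^b f(x)g(x) dx − ((1/(b−a)) ∫_a^b f(x) dx)((1/(b−a)) ∫_a^b g(x) dx). -/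
open MeasureTheory Set intervalIntegral

lemma ceb_lip (a b : ℝ) (f f' : ℝ → ℝ)
    (hf : ∀ x ∈ Icc a b, f x = f a + ∫ t in a..x, f' t)
    (hint : IntervalIntegrable f' volume a b)
    (hbdd : ∃ C, ∀ᵐ t ∂(volume.restrict (Icc a b)), |f' t| ≤ C) :
    ∀ x ∈ Icc a b, ∀ y ∈ Icc a b,
      |f x - f y| ≤ essSup (fun t => |f' t|) (volume.restrict (Icc a b)) * |x - y| := by
  intro x hx y hy
  obtain ⟨C, hC⟩ := hbdd
  have hb : Filter.IsBoundedUnder (· ≤ ·) (ae (volume.restrict (Icc a b))) (fun t => |f' t|) :=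
    ⟨C, by simpa using hC⟩
  have h := ae_le_essSup hb
  have hab : a ≤ b := hx.1.trans hx.2
  have i1 : IntervalIntegrable f' volume a x := hint.mono_set (by
    rw [uIcc_of_le hab, uIcc_of_le hx.1]; exact Icc_subset_Icc_right hx.2)
  have i2 : IntervalIntegrable f' volume a y := hint.mono_set (by
    rw [uIcc_of_le hab, uIcc_of_le hy.1]; exact Icc_subset_Icc_right hy.2)
  have e : f x - f y = ∫ t in y..x, f' t := by
    rw [hf x hx, hf y hy, ← integral_interval_sub_left i1 i2]; ring
  rw [e]
  rw [← Real.norm_eq_abs]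
  refine intervalIntegral.norm_integral_le_of_norm_le_const_ae ?_
  rw [ae_restrict_iff' measurableSet_Icc] at h
  filter_upwards [h] with t ht htm
  refine ht ?_
  have := uIoc_subset_uIcc htm
  exact (uIcc_subset_Icc hy hx) this

lemma ceb_cont (a b M : ℝ) (f : ℝ → ℝ)
    (h : ∀ x ∈ Icc a b, ∀ y ∈ Icc a b, |f x - f y| ≤ M * |x - y|) :
    ContinuousOn f (Icc a b) := by
  have : LipschitzOnWith (Real.toNNReal M) f (Icc a b) := by
    apply LipschitzOnWith.of_dist_le_mul
    intro x hx y hy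
    rw [Real.dist_eq, Real.dist_eq]
    refine (h x hx y hy).trans ?_
    gcongr
    exact Real.le_coe_toNNReal M
  exact this.continuousOn

theorem cebysev_inequality (a b : ℝ) (hab : a < b) (f g f' g' : ℝ → ℝ)
    (hf : ∀ x ∈ Icc a b, f x = f a + ∫ t in a..x, f' t)
    (hg : ∀ x ∈ Icc a b, g x = g a + ∫ t in a..x, g' t)
    (hf'int : IntervalIntegrable f' volume a b)
    (hg'int : IntervalIntegrable g' volume a b)
    (hf'bdd : ∃ C, ∀ᵐ t ∂(volume.restrict (Icc a b)), |f' t| ≤ C)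
    (hg'bdd : ∃ C, ∀ᵐ t ∂(volume.restrict (Icc a b)), |g' t| ≤ C) :
    |(1 / (b - a)) * (∫ x in a..b, f x * g x) -
        ((1 / (b - a)) * ∫ x in a..b, f x) * ((1 / (b - a)) * ∫ x in a..b, g x)| ≤
      (1 / 12) * (b - a) ^ 2 *
        essSup (fun t => |f' t|) (volume.restrict (Icc a b)) *
        essSup (fun t => |g' t|) (volume.restrict (Icc a b)) := by
  have lf := ceb_lip a b f f' hf hf'int hf'bdd
  have lg := ceb_lip a b g g' hg hg'int hg'bdd
  generalize essSup (fun t => |f' t|) (volume.restrict (Icc a b)) = M at *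
  generalize essSup (fun t => |g' t|) (volume.restrict (Icc a b)) = N at *
  have cf := ceb_cont a b M f lf
  have cg := ceb_cont a b N g lg
  have hle := hab.le
  have If : IntervalIntegrable f volume a b := cf.intervalIntegrable_of_Icc hle
  have Ig : IntervalIntegrable g volume a b := cg.intervalIntegrable_of_Icc hle
  have Ifg : IntervalIntegrable (fun x => f x * g x) volume a b :=
    (cf.mul cg).intervalIntegrable_of_Icc hle
  set P := ∫ x in a..b, f x * g x with hP
  set F := ∫ x in a..b, f x with hF
  set G := ∫ x in a..b, g x with hG
  have hJ : ∀ x, ∫ y in a..b, (f x - f y) * (g x - g y)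
      = (b - a) * (f x * g x) - f x * G - g x * F + P := by
    intro x
    have : ∀ y, (f x - f y) * (g x - g y) = f x * g x - f x * g y - g x * f y + f y * g y := by
      intro y; ring
    simp_rw [this]
    rw [intervalIntegral.integral_add
        ((intervalIntegrable_const.sub (Ig.const_mul _)).sub (If.const_mul _)) Ifg,
      intervalIntegral.integral_sub (intervalIntegrable_const.sub (Ig.const_mul _)) (If.const_mul _),
      intervalIntegral.integral_sub intervalIntegrable_const (Ig.const_mul _),
      intervalIntegral.integral_const, intervalIntegral.integral_const_mul,
      intervalIntegral.integral_const_mul, smul_eq_mul]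
  have hJJ : ∫ x in a..b, ((b - a) * (f x * g x) - f x * G - g x * F + P)
      = 2 * ((b - a) * P - F * G) := by
    rw [intervalIntegral.integral_add
        (((Ifg.const_mul _).sub (If.mul_const _)).sub (Ig.mul_const _)) (by simp),
      intervalIntegral.integral_sub ((Ifg.const_mul _).sub (If.mul_const _)) (Ig.mul_const _),
      intervalIntegral.integral_sub (Ifg.const_mul _) (If.mul_const _),
      intervalIntegral.integral_const, intervalIntegral.integral_const_mul,
      intervalIntegral.integral_mul_const,
      intervalIntegral.integral_mul_const, smul_eq_mul]
    ring
  have hb1 : ∀ x ∈ Icc a b, |(b - a) * (f x * g x) - f x * G - g x * F + P|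
      ≤ M * N * (((b - x) ^ 3 - (a - x) ^ 3) / 3) := by
    intro x hx
    rw [← hJ x]
    have e : ∫ y in a..b, M * N * (y - x) ^ 2 = M * N * (((b - x) ^ 3 - (a - x) ^ 3) / 3) := by
      rw [intervalIntegral.integral_const_mul,
        intervalIntegral.integral_comp_sub_right (fun y => y ^ 2) x, integral_pow]
      norm_num
    rw [← e]
    rw [← Real.norm_eq_abs]
    refine intervalIntegral.norm_integral_le_of_norm_le hle ?_
      (Continuous.intervalIntegrable (by fun_prop) _ _)
    refine Filter.Eventually.of_forall fun y hy => ?_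
    have hy' := Ioc_subset_Icc_self hy
    have h1 := lf x hx y hy'
    have h2 := lg x hx y hy'
    rw [Real.norm_eq_abs, abs_mul]
    calc |f x - f y| * |g x - g y| ≤ (M * |x - y|) * (N * |x - y|) :=
          mul_le_mul h1 h2 (abs_nonneg _) ((abs_nonneg _).trans h1)
      _ = M * N * |x - y| ^ 2 := by ring
      _ = _ := by rw [sq_abs]; ring
  have hb2 : |2 * ((b - a) * P - F * G)| ≤ M * N * ((b - a) ^ 4 / 6) := by
    rw [← hJJ]
    have e : ∫ x in a..b, M * N * (((b - x) ^ 3 - (a - x) ^ 3) / 3)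
        = M * N * ((b - a) ^ 4 / 6) := by
      rw [intervalIntegral.integral_const_mul, intervalIntegral.integral_div,
        intervalIntegral.integral_sub (Continuous.intervalIntegrable (by fun_prop) _ _)
          (Continuous.intervalIntegrable (by fun_prop) _ _),
        intervalIntegral.integral_comp_sub_left (fun y => y ^ 3) b,
        intervalIntegral.integral_comp_sub_left (fun y => y ^ 3) a, integral_pow, integral_pow]
      norm_num
      left
      ring
    rw [← e]
    rw [← Real.norm_eq_abs]
    refine intervalIntegral.norm_integral_le_of_norm_le hle ?_
      (Continuous.intervalIntegrable (by fun_prop) _ _)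
    exact Filter.Eventually.of_forall fun y hy => hb1 y (Ioc_subset_Icc_self hy)
  have hd : 0 < b - a := sub_pos.2 hab
  have e : (1 / (b - a)) * P - ((1 / (b - a)) * F) * ((1 / (b - a)) * G)
      = (2 * ((b - a) * P - F * G)) / (2 * (b - a) ^ 2) := by
    field_simp
  rw [e, abs_div, abs_of_pos (show 0 < 2 * (b - a) ^ 2 by positivity),
    div_le_iff₀ (by positivity)]
  refine hb2.trans (le_of_eq ?_)
  ring
end

section
/- Let f and g be integrable functions on [a,b] satisfying φ ≤ f(x) ≤ Φ and γ ≤ g(x) ≤ Γ for all x ∈ [a,b]. Then |(1/(b−a)) ∫_a^b f(x)g(x) dx − ((1/(b−a)) ∫_a^b f(x) dx)((1/(b−a)) ∫_a^b g(x) dx)| ≤ (1/4)(Φ − φ)(Γ − γ). -/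
open MeasureTheory Set intervalIntegral

theorem gruss_mul_int (a b φ Φ : ℝ) (hab : a < b) (f g : ℝ → ℝ)
    (hfint : IntervalIntegrable f volume a b)
    (hgint : IntervalIntegrable g volume a b)
    (hf : ∀ x ∈ Icc a b, φ ≤ f x ∧ f x ≤ Φ) :
    IntervalIntegrable (fun x => f x * g x) volume a b := by
  rw [intervalIntegrable_iff_integrableOn_Ioc_of_le hab.le] at *
  refine Integrable.bdd_mul (c := max |φ| |Φ|) hgint hfint.aestronglyMeasurable ?_
  refine (ae_restrict_iff' measurableSet_Ioc).2 (Filter.Eventually.of_forall fun x hx => ?_)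
  have := hf x ⟨hx.1.le, hx.2⟩
  rw [Real.norm_eq_abs]
  exact abs_le_max_abs_abs this.1 this.2

theorem gruss_var (a b φ Φ : ℝ) (hab : a < b) (f : ℝ → ℝ)
    (hfint : IntervalIntegrable f volume a b)
    (hf : ∀ x ∈ Icc a b, φ ≤ f x ∧ f x ≤ Φ) :
    (1 / (b - a)) * (∫ x in a..b, f x * f x) - ((1 / (b - a)) * ∫ x in a..b, f x) ^ 2
      ≤ (Φ - φ) ^ 2 / 4 := by
  have hff := gruss_mul_int a b φ Φ hab f f hfint hfint hf
  have h0 : 0 ≤ ∫ x in a..b, (Φ - f x) * (f x - φ) :=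
    intervalIntegral.integral_nonneg hab.le fun x hx =>
      mul_nonneg (by linarith [hf x hx]) (by linarith [hf x hx])
  have h1 : ∫ x in a..b, (Φ - f x) * (f x - φ) =
      (Φ + φ) * (∫ x in a..b, f x) - (∫ x in a..b, f x * f x) - (b - a) * (Φ * φ) := by
    have : (fun x => (Φ - f x) * (f x - φ)) = fun x => (Φ + φ) * f x - f x * f x - Φ * φ := by
      funext x; ring
    rw [this, intervalIntegral.integral_sub ((hfint.const_mul _).sub hff) (by simp),
      intervalIntegral.integral_sub (hfint.const_mul _) hff,
      intervalIntegral.integral_const_mul, intervalIntegral.integral_const, smul_eq_mul]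
  rw [h1] at h0
  have hba : 0 < b - a := sub_pos.2 hab
  have h2 := mul_nonneg (one_div_pos.2 hba).le h0
  have h3 : 1 / (b - a) * (b - a) = 1 := by field_simp
  generalize (∫ x in a..b, f x) = I at *
  generalize (∫ x in a..b, f x * f x) = J at *
  generalize 1 / (b - a) = k at *
  have h4 : 0 ≤ (Φ + φ) * (k * I) - k * J - Φ * φ := by
    linear_combination h2 - Φ * φ * h3
  nlinarith [sq_nonneg (k * I - (Φ + φ) / 2)]

theorem gruss_quad (a b φ Φ γ Γ : ℝ) (hab : a < b) (f g : ℝ → ℝ)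
    (hfint : IntervalIntegrable f volume a b)
    (hgint : IntervalIntegrable g volume a b)
    (hf : ∀ x ∈ Icc a b, φ ≤ f x ∧ f x ≤ Φ)
    (hg : ∀ x ∈ Icc a b, γ ≤ g x ∧ g x ≤ Γ) (s F G : ℝ)
    (hF : F = (1 / (b - a)) * ∫ x in a..b, f x) (hG : G = (1 / (b - a)) * ∫ x in a..b, g x) :
    0 ≤ s ^ 2 * ((1 / (b - a)) * (∫ x in a..b, f x * f x) - F ^ 2)
      + 2 * s * ((1 / (b - a)) * (∫ x in a..b, f x * g x) - F * G)
      + ((1 / (b - a)) * (∫ x in a..b, g x * g x) - G ^ 2) := by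
  have hff := gruss_mul_int a b φ Φ hab f f hfint hfint hf
  have hfg := gruss_mul_int a b φ Φ hab f g hfint hgint hf
  have hgg := gruss_mul_int a b γ Γ hab g g hgint hgint hg
  have h0 : 0 ≤ ∫ x in a..b, (s * f x + g x - (s * F + G)) ^ 2 :=
    intervalIntegral.integral_nonneg hab.le fun x hx => sq_nonneg _
  have h1 : ∫ x in a..b, (s * f x + g x - (s * F + G)) ^ 2 =
      s ^ 2 * (∫ x in a..b, f x * f x) + 2 * s * (∫ x in a..b, f x * g x)
      + (∫ x in a..b, g x * g x) + (-2 * (s * F + G) * s) * (∫ x in a..b, f x)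
      + (-2 * (s * F + G)) * (∫ x in a..b, g x) + (b - a) * (s * F + G) ^ 2 := by
    have : (fun x => (s * f x + g x - (s * F + G)) ^ 2) = fun x =>
        s ^ 2 * (f x * f x) + 2 * s * (f x * g x) + g x * g x
        + (-2 * (s * F + G) * s) * f x + (-2 * (s * F + G)) * g x + (s * F + G) ^ 2 := by
      funext x; ring
    have i1 := (hff.const_mul (s ^ 2))
    have i2 := i1.add (hfg.const_mul (2 * s))
    have i3 := i2.add hgg
    have i4 := i3.add (hfint.const_mul (-2 * (s * F + G) * s))
    have i5 := i4.add (hgint.const_mul (-2 * (s * F + G)))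
    rw [this, intervalIntegral.integral_add i5 (by simp),
      intervalIntegral.integral_add i4 (hgint.const_mul _),
      intervalIntegral.integral_add i3 (hfint.const_mul _),
      intervalIntegral.integral_add i2 hgg,
      intervalIntegral.integral_add i1 (hfg.const_mul _)]
    simp only [intervalIntegral.integral_const_mul, intervalIntegral.integral_const, smul_eq_mul]
  rw [h1] at h0
  have hba : 0 < b - a := sub_pos.2 hab
  have h2 := mul_nonneg (one_div_pos.2 hba).le h0
  have h3 : 1 / (b - a) * (b - a) = 1 := by field_simp
  generalize 1 / (b - a) = k at *
  linear_combination h2 + (s * F + G) ^ 2 * h3 + 2 * (s * F + G) * s * hF + 2 * (s * F + G) * hG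

/-- **Grüss inequality.** If `f, g` are integrable on `[a,b]` with
`φ ≤ f ≤ Φ` and `γ ≤ g ≤ Γ` on `[a,b]`, then
`|M(fg) − M(f)M(g)| ≤ (1/4)(Φ−φ)(Γ−γ)`. -/
theorem gruss_inequality (a b φ Φ γ Γ : ℝ) (hab : a < b) (f g : ℝ → ℝ)
    (hfint : IntervalIntegrable f volume a b)
    (hgint : IntervalIntegrable g volume a b)
    (hf : ∀ x ∈ Icc a b, φ ≤ f x ∧ f x ≤ Φ)
    (hg : ∀ x ∈ Icc a b, γ ≤ g x ∧ g x ≤ Γ) :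
    |(1 / (b - a)) * (∫ x in a..b, f x * g x) -
        ((1 / (b - a)) * ∫ x in a..b, f x) * ((1 / (b - a)) * ∫ x in a..b, g x)| ≤
      (1 / 4) * (Φ - φ) * (Γ - γ) := by
  have v1 := gruss_var a b φ Φ hab f hfint hf
  have v2 := gruss_var a b γ Γ hab g hgint hg
  have q := fun s => gruss_quad a b φ Φ γ Γ hab f g hfint hgint hf hg s _ _ rfl rfl
  have ha : a ∈ Icc a b := ⟨le_rfl, hab.le⟩
  have hD : 0 ≤ Φ - φ := by linarith [hf a ha]
  have hE : 0 ≤ Γ - γ := by linarith [hg a ha]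
  generalize (1 / (b - a)) * (∫ x in a..b, f x * g x) -
        ((1 / (b - a)) * ∫ x in a..b, f x) * ((1 / (b - a)) * ∫ x in a..b, g x) = C at *
  have h : ∀ s : ℝ, 0 ≤ (Φ - φ) ^ 2 / 4 * (s * s) + (2 * C) * s + (Γ - γ) ^ 2 / 4 := by
    intro s
    have h1 := mul_le_mul_of_nonneg_left v1 (sq_nonneg s)
    linarith [q s]
  have d := discrim_le_zero h
  rw [discrim] at d
  apply abs_le_of_sq_le_sq _ (by positivity)
  linarith
end

section
/- Let f : [a,b] → ℝ be differentiable on [a,b] with f′ integrable on [a,b]. Then for every x ∈ [a,b], f(x) = (1/(b−a)) ∫_a^b f(t) dt + ∫_a^b P₁(x,t) f′(t) dt, where P₁(x,t) = (t−a)/(b−a) for a ≤ t < x and P₁(x,t) = (t−b)/(b−a) for x ≤ t ≤ b. -/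
open MeasureTheory Set intervalIntegral

/-- **Montgomery identity.** If `f` is differentiable on `[a,b]` with derivative `f'`
integrable on `[a,b]`, then for every `x ∈ [a,b]`,
`f(x) = (1/(b−a)) ∫_a^b f(t) dt + ∫_a^b P₁(x,t) f'(t) dt`, where
`P₁(x,t) = (t−a)/(b−a)` for `t < x` and `P₁(x,t) = (t−b)/(b−a)` for `x ≤ t`. -/
theorem montgomery_identity (a b : ℝ) (hab : a < b) (f f' : ℝ → ℝ)
    (hderiv : ∀ x ∈ Icc a b, HasDerivAt f (f' x) x)
    (hint : IntervalIntegrable f' volume a b) :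
    ∀ x ∈ Icc a b,
      f x = (1 / (b - a)) * (∫ t in a..b, f t) +
        ∫ t in a..b, (if t < x then (t - a) / (b - a) else (t - b) / (b - a)) * f' t := by
  intro x hx
  have hba : b - a ≠ 0 := by linarith
  have hcont : ContinuousOn f (Icc a b) := fun t ht => (hderiv t ht).continuousAt.continuousWithinAt
  have hs1 : uIcc a x ⊆ Icc a b := by
    rw [uIcc_of_le hx.1]; exact Icc_subset_Icc le_rfl hx.2
  have hs2 : uIcc x b ⊆ Icc a b := by
    rw [uIcc_of_le hx.2]; exact Icc_subset_Icc hx.1 le_rfl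
  have hs : Icc a b = uIcc a b := (uIcc_of_le hab.le).symm
  have hi1 : IntervalIntegrable f' volume a x := hint.mono_set (hs ▸ hs1)
  have hi2 : IntervalIntegrable f' volume x b := hint.mono_set (hs ▸ hs2)
  have hf1 : IntervalIntegrable f volume a x := (hcont.mono hs1).intervalIntegrable
  have hf2 : IntervalIntegrable f volume x b := (hcont.mono hs2).intervalIntegrable
  have hu : ∀ c t : ℝ, HasDerivAt (fun t : ℝ => (t - c) / (b - a)) (1 / (b - a)) t :=
    fun c t => ((hasDerivAt_id t).sub_const c).div_const (b - a)
  have p1 := integral_mul_deriv_eq_deriv_mul (a := a) (b := x)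
    (fun t _ => hu a t) (fun t ht => hderiv t (hs1 ht)) intervalIntegrable_const hi1
  have p2 := integral_mul_deriv_eq_deriv_mul (a := x) (b := b)
    (fun t _ => hu b t) (fun t ht => hderiv t (hs2 ht)) intervalIntegrable_const hi2
  rw [intervalIntegral.integral_const_mul] at p1 p2
  have e1 : ∀ᵐ t ∂volume, t ∈ uIoc a x → (t - a) / (b - a) * f' t =
      (if t < x then (t - a) / (b - a) else (t - b) / (b - a)) * f' t := by
    have hne : ∀ᵐ t : ℝ ∂volume, t ≠ x := Measure.ae_ne volume x
    filter_upwards [hne] with t ht hm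
    rw [uIoc_of_le hx.1] at hm
    rw [if_pos (lt_of_le_of_ne hm.2 ht)]
  have e2 : ∀ᵐ t ∂volume, t ∈ uIoc x b → (t - b) / (b - a) * f' t =
      (if t < x then (t - a) / (b - a) else (t - b) / (b - a)) * f' t := by
    refine Filter.Eventually.of_forall fun t hm => ?_
    rw [uIoc_of_le hx.2] at hm
    rw [if_neg (not_lt.mpr hm.1.le)]
  have g1 : IntervalIntegrable (fun t => (t - a) / (b - a) * f' t) volume a x :=
    hi1.continuousOn_mul (by fun_prop)
  have g2 : IntervalIntegrable (fun t => (t - b) / (b - a) * f' t) volume x b :=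
    hi2.continuousOn_mul (by fun_prop)
  have k1 := g1.congr_ae ((ae_restrict_iff' measurableSet_uIoc).2 e1)
  have k2 := g2.congr_ae ((ae_restrict_iff' measurableSet_uIoc).2 e2)
  rw [← integral_add_adjacent_intervals k1 k2, ← integral_add_adjacent_intervals hf1 hf2,
    ← integral_congr_ae e1, ← integral_congr_ae e2, p1, p2]
  field_simp
  ring
end

section
/- Let I ⊂ ℝ be an open interval, a, b ∈ I with a < b, and let f : I → ℝ be a differentiable function such that there exist constants φ, Φ ∈ ℝ with φ ≤ f′(x) ≤ Φ for all x ∈ [a,b]. Then for all x ∈ [a,b], |f(x) − ((f(b) − f(a))/(b−a))(x − (a+b)/2) − (1/(b−a)) ∫_a^b f(t) dt| ≤ (1/4)(b−a)(Φ − φ). -/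
open MeasureTheory Set intervalIntegral

/-- **Cheng's Ostrowski–Grüss type inequality.** Let `I` be an open interval,
`a, b ∈ I` with `a < b`, and `f : ℝ → ℝ` differentiable on `I` with derivative `f'`
satisfying `φ ≤ f' ≤ Φ` on `[a,b]`.  Then for all `x ∈ [a,b]`,
`|f(x) − ((f(b)−f(a))/(b−a))(x − (a+b)/2) − (1/(b−a))∫_a^b f| ≤ (1/4)(b−a)(Φ−φ)`. -/
theorem cheng_ostrowski_gruss (I : Set ℝ) (hIopen : IsOpen I) (hIconn : I.OrdConnected)
    (a b : ℝ) (ha : a ∈ I) (hb : b ∈ I) (hab : a < b)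
    (f f' : ℝ → ℝ) (hderiv : ∀ x ∈ I, HasDerivAt f (f' x) x)
    (φ Φ : ℝ) (hbound : ∀ x ∈ Icc a b, φ ≤ f' x ∧ f' x ≤ Φ) :
    ∀ x ∈ Icc a b,
      |f x - ((f b - f a) / (b - a)) * (x - (a + b) / 2) -
          (1 / (b - a)) * ∫ t in a..b, f t| ≤
        (1 / 4) * (b - a) * (Φ - φ) := by
  intro x hx
  have hsub : Icc a b ⊆ I := hIconn.out ha hb
  have hcont : ContinuousOn f (Icc a b) := fun y hy =>
    (hderiv y (hsub hy)).continuousAt.continuousWithinAt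
  have hdiff : DifferentiableOn ℝ f (interior (Icc a b)) := fun y hy =>
    (hderiv y (hsub (interior_subset hy))).differentiableAt.differentiableWithinAt
  have hlo : ∀ u ∈ Icc a b, ∀ v ∈ Icc a b, u ≤ v → φ * (v - u) ≤ f v - f u :=
    (convex_Icc a b).mul_sub_le_image_sub_of_le_deriv hcont hdiff (fun y hy => by
      rw [(hderiv y (hsub (interior_subset hy))).deriv]
      exact (hbound y (interior_subset hy)).1)
  have hhi : ∀ u ∈ Icc a b, ∀ v ∈ Icc a b, u ≤ v → f v - f u ≤ Φ * (v - u) :=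
    (convex_Icc a b).image_sub_le_mul_sub_of_deriv_le hcont hdiff (fun y hy => by
      rw [(hderiv y (hsub (interior_subset hy))).deriv]
      exact (hbound y (interior_subset hy)).2)
  have hL : 0 < b - a := sub_pos.2 hab
  obtain ⟨S, hS⟩ : ∃ S, S = (f b - f a) / (b - a) := ⟨_, rfl⟩
  have hSL : f b - f a = S * (b - a) := by rw [hS]; field_simp
  rw [← hS]
  have haI : a ∈ Icc a b := left_mem_Icc.2 hab.le
  have hbI : b ∈ Icc a b := right_mem_Icc.2 hab.le
  have hK : 0 ≤ Φ - φ := by have := hbound a haI; linarith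
  -- oscillation bound
  have key : ∀ u ∈ Icc a b, ∀ v ∈ Icc a b, u ≤ v →
      |f v - f u - S * (v - u)| ≤ (1 / 4) * (b - a) * (Φ - φ) := by
    intro u hu v hv huv
    have h1 := hlo u hu v hv huv
    have h2 := hhi u hu v hv huv
    have h3 := hlo a haI u hu hu.1
    have h4 := hhi a haI u hu hu.1
    have h5 := hlo v hv b hbI hv.2
    have h6 := hhi v hv b hbI hv.2
    have hd : 0 ≤ v - u := sub_nonneg.2 huv
    have hd' : 0 ≤ (b - a) - (v - u) := by linarith [hu.1, hv.2]
    obtain ⟨d, hdd⟩ : ∃ d, d = v - u := ⟨_, rfl⟩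
    obtain ⟨L, hLL⟩ : ∃ L, L = b - a := ⟨_, rfl⟩
    obtain ⟨D, hD⟩ : ∃ D, D = f v - f u - S * (v - u) := ⟨_, rfl⟩
    have e1 : D ≤ (Φ - S) * d := by rw [hD, hdd]; linarith
    have e2 : -D ≤ (S - φ) * d := by rw [hD, hdd]; linarith
    have e3 : D ≤ (S - φ) * (L - d) := by rw [hD, hdd, hLL]; linarith
    have e4 : -D ≤ (Φ - S) * (L - d) := by rw [hD, hdd, hLL]; linarith
    rw [← hD, ← hLL]
    rw [← hdd] at hd
    rw [← hdd, ← hLL] at hd'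
    rw [← hLL] at hL
    have hq : 0 ≤ (Φ - φ) * (L - 2 * d) ^ 2 := by positivity
    rw [abs_le]
    constructor
    · have g1 := mul_le_mul_of_nonneg_right e2 hd'
      have g2 := mul_le_mul_of_nonneg_right e4 hd
      refine le_of_mul_le_mul_right ?_ hL
      linarith
    · have g1 := mul_le_mul_of_nonneg_right e1 hd'
      have g2 := mul_le_mul_of_nonneg_right e3 hd
      refine le_of_mul_le_mul_right ?_ hL
      linarith
  have key2 : ∀ t ∈ Set.uIoc a b, ‖(f x - S * x) + S * t - f t‖ ≤ (1 / 4) * (b - a) * (Φ - φ) := by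
    intro t ht
    rw [uIoc_of_le hab.le] at ht
    have ht' : t ∈ Icc a b := ⟨ht.1.le, ht.2⟩
    rw [Real.norm_eq_abs]
    rcases le_total t x with h | h
    · have := key t ht' x hx h
      rwa [show f x - S * x + S * t - f t = f x - f t - S * (x - t) by ring]
    · have := key x hx t ht' h
      rw [← abs_neg] at this
      rwa [show f x - S * x + S * t - f t = -(f t - f x - S * (t - x)) by ring]
  have hint := norm_integral_le_of_norm_le_const key2
  have hfi : IntervalIntegrable f volume a b :=
    ContinuousOn.intervalIntegrable (by rwa [uIcc_of_le hab.le])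
  have heq : ∫ t in a..b, ((f x - S * x) + S * t - f t) =
      (b - a) * (f x - S * (x - (a + b) / 2) - (1 / (b - a)) * ∫ t in a..b, f t) := by
    rw [intervalIntegral.integral_sub (Continuous.intervalIntegrable (by fun_prop) _ _) hfi,
      intervalIntegral.integral_add (Continuous.intervalIntegrable (by fun_prop) _ _)
        (Continuous.intervalIntegrable (by fun_prop) _ _),
      intervalIntegral.integral_const, intervalIntegral.integral_const_mul, integral_id,
      smul_eq_mul]
    field_simp
    ring
  rw [heq, Real.norm_eq_abs, abs_mul, abs_of_pos hL, mul_comm] at hint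
  exact le_of_mul_le_mul_right hint hL
end

section
/- Let I ⊂ ℝ be an open interval, a, b ∈ I with a < b, and let f : I → ℝ be a differentiable function such that there exist constants φ, Φ ∈ ℝ with φ ≤ f′(x) ≤ Φ for all x ∈ [a,b]. Then for all x ∈ [a,b], |f(x) − ((f(b) − f(a))/(b−a))(x − (a+b)/2) − (1/(b−a)) ∫_a^b f(t) dt| ≤ (1/(4√3))(b−a)(Φ − φ). -/
open MeasureTheory Set intervalIntegral

lemma mpu_left (g : ℝ → ℝ) (M p q : ℝ) (hpq : p ≤ q)
    (hc : ContinuousOn g (Icc p q))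
    (hL : ∀ s ∈ Icc p q, ∀ t ∈ Icc p q, |g s - g t| ≤ M * |s - t|) :
    |(q - p) * g p - ∫ t in p..q, g t| ≤ M * (q - p) ^ 2 / 2 := by
  have hi : IntervalIntegrable g volume p q :=
    ContinuousOn.intervalIntegrable (by rwa [uIcc_of_le hpq])
  have h1 : (q - p) * g p - ∫ t in p..q, g t = ∫ t in p..q, (g p - g t) := by
    rw [intervalIntegral.integral_sub (by simp) hi]; simp
  have h2 : ∫ t in p..q, M * (t - p) = M * (q - p) ^ 2 / 2 := by
    rw [intervalIntegral.integral_const_mul, intervalIntegral.integral_sub (by simp) (by simp)]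
    simp; ring
  rw [h1, ← h2, ← Real.norm_eq_abs]
  apply intervalIntegral.norm_integral_le_of_norm_le hpq
  · refine Filter.Eventually.of_forall fun t ht => ?_
    have := hL p ⟨le_rfl, hpq⟩ t ⟨ht.1.le, ht.2⟩
    rwa [abs_sub_comm p t, abs_of_pos (sub_pos.2 ht.1)] at this
  · exact Continuous.intervalIntegrable (by fun_prop) _ _

lemma mpu_right (g : ℝ → ℝ) (M p q : ℝ) (hpq : p ≤ q)
    (hc : ContinuousOn g (Icc p q))
    (hL : ∀ s ∈ Icc p q, ∀ t ∈ Icc p q, |g s - g t| ≤ M * |s - t|) :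
    |(q - p) * g q - ∫ t in p..q, g t| ≤ M * (q - p) ^ 2 / 2 := by
  have hi : IntervalIntegrable g volume p q :=
    ContinuousOn.intervalIntegrable (by rwa [uIcc_of_le hpq])
  have h1 : (q - p) * g q - ∫ t in p..q, g t = ∫ t in p..q, (g q - g t) := by
    rw [intervalIntegral.integral_sub (by simp) hi]; simp
  have h2 : ∫ t in p..q, M * (q - t) = M * (q - p) ^ 2 / 2 := by
    rw [intervalIntegral.integral_const_mul, intervalIntegral.integral_sub (by simp) (by simp)]
    simp; ring
  rw [h1, ← h2, ← Real.norm_eq_abs]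
  apply intervalIntegral.norm_integral_le_of_norm_le hpq
  · refine Filter.Eventually.of_forall fun t ht => ?_
    have := hL q ⟨hpq, le_rfl⟩ t ⟨ht.1.le, ht.2⟩
    rwa [abs_of_nonneg (sub_nonneg.2 ht.2)] at this
  · exact Continuous.intervalIntegrable (by fun_prop) _ _

lemma mpu_half (g : ℝ → ℝ) (M a b : ℝ) (hab : a < b)
    (hc : ContinuousOn g (Icc a b))
    (hL : ∀ s ∈ Icc a b, ∀ t ∈ Icc a b, |g s - g t| ≤ M * |s - t|)
    (x : ℝ) (hx : x ∈ Icc a b) (hm : (a + b) / 2 ≤ x) :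
    |(b - a) * g x - (g b - g a) * (x - (a + b) / 2) - ∫ t in a..b, g t|
      ≤ M * (b - a) ^ 2 / 4 := by
  obtain ⟨hxa, hxb⟩ := hx
  obtain ⟨p, hp⟩ : ∃ p, p = x - (b - a) / 2 := ⟨_, rfl⟩
  have hap : a ≤ p := by linarith
  have hpx : p ≤ x := by linarith
  have s1 : Icc a p ⊆ Icc a b := Icc_subset_Icc le_rfl (by linarith)
  have s2 : Icc p x ⊆ Icc a b := Icc_subset_Icc hap hxb
  have s3 : Icc x b ⊆ Icc a b := Icc_subset_Icc hxa le_rfl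
  have e1 := mpu_left g M a p hap (hc.mono s1) fun s hs t ht => hL s (s1 hs) t (s1 ht)
  have e2 := mpu_right g M p x hpx (hc.mono s2) fun s hs t ht => hL s (s2 hs) t (s2 ht)
  have e3 := mpu_left g M x b hxb (hc.mono s3) fun s hs t ht => hL s (s3 hs) t (s3 ht)
  have e4 := hL b ⟨hab.le, le_rfl⟩ x ⟨hxa, hxb⟩
  rw [abs_of_nonneg (sub_nonneg.2 hxb)] at e4
  have i1 : IntervalIntegrable g volume a p :=
    ContinuousOn.intervalIntegrable (by rw [uIcc_of_le hap]; exact hc.mono s1)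
  have i2 : IntervalIntegrable g volume p x :=
    ContinuousOn.intervalIntegrable (by rw [uIcc_of_le hpx]; exact hc.mono s2)
  have i3 : IntervalIntegrable g volume x b :=
    ContinuousOn.intervalIntegrable (by rw [uIcc_of_le hxb]; exact hc.mono s3)
  rw [← intervalIntegral.integral_add_adjacent_intervals (i1.trans i2) i3,
    ← intervalIntegral.integral_add_adjacent_intervals i1 i2]
  have hw : 0 ≤ x - (a + b) / 2 := by linarith
  rw [abs_le] at *
  have f1 := mul_le_mul_of_nonneg_left e4.1 hw
  have f2 := mul_le_mul_of_nonneg_left e4.2 hw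
  subst hp
  constructor <;> nlinarith

lemma mpu_full (g : ℝ → ℝ) (M a b : ℝ) (hab : a < b)
    (hc : ContinuousOn g (Icc a b))
    (hL : ∀ s ∈ Icc a b, ∀ t ∈ Icc a b, |g s - g t| ≤ M * |s - t|)
    (x : ℝ) (hx : x ∈ Icc a b) :
    |(b - a) * g x - (g b - g a) * (x - (a + b) / 2) - ∫ t in a..b, g t|
      ≤ M * (b - a) ^ 2 / 4 := by
  rcases le_total ((a + b) / 2) x with hm | hm
  · exact mpu_half g M a b hab hc hL x hx hm
  · have hr : ∀ t ∈ Icc a b, a + b - t ∈ Icc a b := fun t ht =>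
      ⟨by linarith [ht.2], by linarith [ht.1]⟩
    have h := mpu_half (fun t => g (a + b - t)) M a b hab
      (hc.comp (by fun_prop) hr)
      (fun s hs t ht => by
        have := hL _ (hr s hs) _ (hr t ht)
        rwa [show a + b - s - (a + b - t) = -(s - t) by ring, abs_neg] at this)
      (a + b - x) (hr x hx) (by linarith)
    rw [intervalIntegral.integral_comp_sub_left (fun t => g t)] at h
    simp only [sub_sub_cancel, add_sub_cancel_left, add_sub_cancel_right] at h
    convert h using 2
    ring



/-- **Matić–Pečarić–Ujević inequality.** Let `I` be an open interval,
`a, b ∈ I` with `a < b`, and `f : ℝ → ℝ` differentiable on `I` with derivative `f'`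
satisfying `φ ≤ f' ≤ Φ` on `[a,b]`.  Then for all `x ∈ [a,b]`,
`|f(x) − ((f(b)−f(a))/(b−a))(x − (a+b)/2) − (1/(b−a))∫_a^b f| ≤ (1/(4√3))(b−a)(Φ−φ)`. -/
theorem matic_pecaric_ujevic (I : Set ℝ) (hIopen : IsOpen I) (hIconn : I.OrdConnected)
    (a b : ℝ) (ha : a ∈ I) (hb : b ∈ I) (hab : a < b)
    (f f' : ℝ → ℝ) (hderiv : ∀ x ∈ I, HasDerivAt f (f' x) x)
    (φ Φ : ℝ) (hbound : ∀ x ∈ Icc a b, φ ≤ f' x ∧ f' x ≤ Φ) :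
    ∀ x ∈ Icc a b,
      |f x - ((f b - f a) / (b - a)) * (x - (a + b) / 2) -
          (1 / (b - a)) * ∫ t in a..b, f t| ≤
        (1 / (4 * Real.sqrt 3)) * (b - a) * (Φ - φ) := by
  intro x hx
  have hsub : Icc a b ⊆ I := hIconn.out ha hb
  have hcf : ContinuousOn f (Icc a b) := fun t ht =>
    (hderiv t (hsub ht)).continuousAt.continuousWithinAt
  have hif : IntervalIntegrable f volume a b :=
    ContinuousOn.intervalIntegrable (by rwa [uIcc_of_le hab.le])
  have h := mpu_full (fun t => f t - (φ + Φ) / 2 * t) ((Φ - φ) / 2) a b hab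
    (hcf.sub (by fun_prop))
    (fun s hs t ht => by
      have := (convex_Icc a b).norm_image_sub_le_of_norm_hasDerivWithin_le
        (f := fun t => f t - (φ + Φ) / 2 * t) (f' := fun t => f' t - (φ + Φ) / 2)
        (C := (Φ - φ) / 2)
        (fun y hy => by
          have h1 := (hderiv y (hsub hy)).sub ((hasDerivAt_id y).const_mul ((φ + Φ) / 2))
          rw [mul_one] at h1
          exact h1.hasDerivWithinAt)
        (fun y hy => by
          have := hbound y hy
          rw [Real.norm_eq_abs, abs_le]
          constructor <;> linarith [this.1, this.2]) ht hs
      simpa only [Real.norm_eq_abs] using this) x hx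
  rw [intervalIntegral.integral_sub hif (Continuous.intervalIntegrable (by fun_prop) _ _),
    intervalIntegral.integral_const_mul, integral_id] at h
  have hpos : 0 < b - a := sub_pos.2 hab
  have hd : 0 ≤ Φ - φ := by have := hbound x hx; linarith [this.1, this.2]
  have hE : f x - ((f b - f a) / (b - a)) * (x - (a + b) / 2) -
      (1 / (b - a)) * ∫ t in a..b, f t =
      ((b - a) * (f x - (φ + Φ) / 2 * x) - (f b - (φ + Φ) / 2 * b - (f a - (φ + Φ) / 2 * a)) *
        (x - (a + b) / 2) - ((∫ t in a..b, f t) - (φ + Φ) / 2 * ((b ^ 2 - a ^ 2) / 2))) /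
        (b - a) := by
    field_simp
    ring
  rw [hE, abs_div, abs_of_pos hpos, div_le_iff₀ hpos]
  refine h.trans ?_
  have h3 : Real.sqrt 3 ≤ 2 := by
    rw [Real.sqrt_le_left (by norm_num)]; norm_num
  have h3p : 0 < Real.sqrt 3 := by positivity
  have h8 : (1 : ℝ) / 8 ≤ 1 / (4 * Real.sqrt 3) :=
    one_div_le_one_div_of_le (by positivity) (by linarith)
  have := mul_le_mul_of_nonneg_right h8 (mul_nonneg hd (sq_nonneg (b - a)))
  nlinarith
end

section
/- Let f : [a,b] → ℝ be an absolutely continuous mapping whose derivative f′ belongs to L₂[a,b]. Then for all x ∈ [a,b], |f(x) − ((f(b) − f(a))/(b−a))(x − (a+b)/2) − (1/(b−a)) ∫_a^b f(t) dt| ≤ ((b−a)/(2√3)) · ((1/(b−a)) ‖f′‖₂² − ((f(b) − f(a))/(b−a))²)^{1/2}. -/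
open MeasureTheory Set intervalIntegral

lemma bd_parts (a b : ℝ) (g : ℝ → ℝ) (hg : IntervalIntegrable g volume a b) :
    ∫ t in a..b, t * g t = b * (∫ t in a..b, g t) - ∫ t in a..b, ∫ s in a..t, g s := by
  have hF := hg.absolutelyContinuousOnInterval_intervalIntegral (left_mem_uIcc)
  have hid : AbsolutelyContinuousOnInterval (fun x : ℝ => x) a b :=
    (contDiff_id.contDiffOn).absolutelyContinuousOnInterval
  have h := hid.integral_mul_deriv_eq_deriv_mul hF
  have hd : ∫ t in a..b, t * deriv (fun x => ∫ s in a..x, g s) t = ∫ t in a..b, t * g t := by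
    apply intervalIntegral.integral_congr_ae
    filter_upwards [hg.ae_hasDerivAt_integral] with t ht hm
    rw [(ht (uIoc_subset_uIcc hm) a left_mem_uIcc).deriv]
  rw [hd] at h
  simpa using h

lemma bd_quad (u v p l : ℝ) (huv : u ≤ v) (g : ℝ → ℝ) (hg : IntervalIntegrable g volume u v)
    (hg2 : IntervalIntegrable (fun t => (g t) ^ 2) volume u v) :
    0 ≤ (∫ t in u..v, (g t) ^ 2) - 2 * p * (∫ t in u..v, g t) - 2 * l * (∫ t in u..v, t * g t)
      + (p ^ 2 * (v - u) + p * l * (v ^ 2 - u ^ 2) + l ^ 2 * (v ^ 3 - u ^ 3) / 3) := by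
  have h0 : 0 ≤ ∫ t in u..v, (g t - (p + l * t)) ^ 2 :=
    intervalIntegral.integral_nonneg huv (fun _ _ => sq_nonneg _)
  have htg : IntervalIntegrable (fun t => t * g t) volume u v :=
    hg.continuousOn_mul continuousOn_id
  have hp : ∫ t in u..v, (p + l * t) ^ 2 =
      p ^ 2 * (v - u) + p * l * (v ^ 2 - u ^ 2) + l ^ 2 * (v ^ 3 - u ^ 3) / 3 := by
    rw [intervalIntegral.integral_eq_sub_of_hasDerivAt
      (f := fun t => p ^ 2 * t + p * l * t ^ 2 + l ^ 2 * t ^ 3 / 3)]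
    · ring
    · intro t _
      have h1 := (((hasDerivAt_id t).const_mul (p ^ 2)).add
        (((hasDerivAt_id t).pow 2).const_mul (p * l))).add
        ((((hasDerivAt_id t).pow 3).const_mul (l ^ 2)).div_const 3)
      convert! h1 using 1
      simp
      ring
    · exact Continuous.intervalIntegrable (by fun_prop) _ _
  have he : (fun t => (g t - (p + l * t)) ^ 2) = fun t =>
      (g t) ^ 2 - 2 * p * g t - 2 * l * (t * g t) + (p + l * t) ^ 2 := by
    funext t; ring
  rw [he, intervalIntegral.integral_add
      ((hg2.sub (hg.const_mul _)).sub (htg.const_mul _))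
      (Continuous.intervalIntegrable (by fun_prop) _ _),
    intervalIntegral.integral_sub (hg2.sub (hg.const_mul _)) (htg.const_mul _),
    intervalIntegral.integral_sub hg2 (hg.const_mul _),
    intervalIntegral.integral_const_mul, intervalIntegral.integral_const_mul, hp] at h0
  exact h0


/-- **Barnett–Dragomir et al.** If `f` is absolutely continuous on `[a,b]`
(i.e. the integral of its derivative `f'`) with `f' ∈ L₂[a,b]`, then for all `x ∈ [a,b]`,
`|f(x) − ((f(b)−f(a))/(b−a))(x − (a+b)/2) − (1/(b−a))∫_a^b f|
  ≤ ((b−a)/(2√3)) ((1/(b−a))‖f'‖₂² − ((f(b)−f(a))/(b−a))²)^{1/2}`. -/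
theorem barnett_dragomir_L2 (a b : ℝ) (hab : a < b) (f f' : ℝ → ℝ)
    (hf : ∀ x ∈ Icc a b, f x = f a + ∫ t in a..x, f' t)
    (hint : IntervalIntegrable f' volume a b)
    (hL2 : IntervalIntegrable (fun t => (f' t) ^ 2) volume a b) :
    ∀ x ∈ Icc a b,
      |f x - ((f b - f a) / (b - a)) * (x - (a + b) / 2) -
          (1 / (b - a)) * ∫ t in a..b, f t| ≤
        ((b - a) / (2 * Real.sqrt 3)) *
          Real.sqrt ((1 / (b - a)) * (∫ t in a..b, (f' t) ^ 2) -
            ((f b - f a) / (b - a)) ^ 2) := by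
  intro x hx
  have hxm : x ∈ uIcc a b := by rw [uIcc_of_le hab.le]; exact hx
  have s1 : uIcc a x ⊆ uIcc a b := uIcc_subset_uIcc_left hxm
  have s2 : uIcc x b ⊆ uIcc a b := uIcc_subset_uIcc_right hxm
  have htg : IntervalIntegrable (fun t => t * f' t) volume a b :=
    hint.continuousOn_mul continuousOn_id
  have hparts := bd_parts a b f' hint
  have hfx := hf x hx
  have hfb := hf b (right_mem_Icc.2 hab.le)
  have hF := (hint.absolutelyContinuousOnInterval_intervalIntegral
    (left_mem_uIcc)).continuousOn.intervalIntegrable (μ := volume)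
  have hif : ∫ t in a..b, f t = (b - a) * f a + ∫ t in a..b, ∫ s in a..t, f' s := by
    rw [intervalIntegral.integral_congr (g := fun t => f a + ∫ s in a..t, f' s),
      intervalIntegral.integral_add (by simp) hF]
    · simp
    · intro t ht
      rw [uIcc_of_le hab.le] at ht
      exact hf t ht
  have a1 := intervalIntegral.integral_add_adjacent_intervals (hint.mono_set s1) (hint.mono_set s2)
  have a2 := intervalIntegral.integral_add_adjacent_intervals (hL2.mono_set s1) (hL2.mono_set s2)
  have a3 := intervalIntegral.integral_add_adjacent_intervals (htg.mono_set s1) (htg.mono_set s2)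
  have q1 := fun p l => bd_quad a x p l hx.1 f' (hint.mono_set s1) (hL2.mono_set s1)
  have q2 := fun p l => bd_quad x b p l hx.2 f' (hint.mono_set s2) (hL2.mono_set s2)
  have hh : 0 < b - a := sub_pos.2 hab
  generalize (∫ t in a..b, ∫ s in a..t, f' s) = J at *
  generalize (∫ t in a..b, f t) = If at *
  generalize (∫ t in a..b, t * f' t) = T at *
  generalize (∫ t in a..x, t * f' t) = T1 at *
  generalize (∫ t in x..b, t * f' t) = T2 at *
  generalize (∫ t in a..b, f' t) = F at *
  generalize (∫ t in a..x, f' t) = F1 at *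
  generalize (∫ t in x..b, f' t) = F2 at *
  generalize (∫ t in a..b, f' t ^ 2) = G at *
  generalize (∫ t in a..x, f' t ^ 2) = G1 at *
  generalize (∫ t in x..b, f' t ^ 2) = G2 at *
  obtain ⟨S, hS⟩ : ∃ S, S = (f b - f a) / (b - a) := ⟨_, rfl⟩
  have hSF : F = S * (b - a) := by rw [hS, hfb]; field_simp; ring
  rw [← hS]
  obtain ⟨L, hL⟩ : ∃ L, L = f x - S * (x - (a + b) / 2) - 1 / (b - a) * If := ⟨_, rfl⟩
  rw [← hL]
  have hLI : (b - a) * L = (b - a) * F1 - J - S * (b - a) * (x - (a + b) / 2) := by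
    rw [hL, hif, hfx]; field_simp; ring
  have key : ∀ l : ℝ, 0 ≤ (G - (b - a) * S ^ 2) - 2 * l * ((b - a) * L)
      + l ^ 2 * ((b - a) ^ 3 / 12) := by
    intro l
    have h1 := q1 (S - l * (a + (x - (a + b) / 2))) l
    have h2 := q2 (S - l * (b + (x - (a + b) / 2))) l
    have h3 := add_nonneg h1 h2
    rw [hLI]
    obtain rfl : F2 = F - F1 := by linarith
    obtain rfl : G2 = G - G1 := by linarith
    obtain rfl : T2 = T - T1 := by linarith
    subst hparts
    subst hSF
    refine h3.trans (le_of_eq ?_)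
    ring
  have k := key (12 * L / (b - a) ^ 2)
  have k2 : L ^ 2 ≤ ((b - a) / (2 * Real.sqrt 3)) ^ 2 * (1 / (b - a) * G - S ^ 2) := by
    rw [div_pow, mul_pow, Real.sq_sqrt (by norm_num)]
    have e : (G - (b - a) * S ^ 2) - 2 * (12 * L / (b - a) ^ 2) * ((b - a) * L)
      + (12 * L / (b - a) ^ 2) ^ 2 * ((b - a) ^ 3 / 12) =
      12 / (b - a) * ((b - a) ^ 2 / (2 ^ 2 * 3) * (1 / (b - a) * G - S ^ 2) - L ^ 2) := by
      field_simp; ring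
    rw [e] at k
    have := nonneg_of_mul_nonneg_right k (by positivity)
    linarith
  have hc : 0 ≤ (b - a) / (2 * Real.sqrt 3) := by positivity
  calc |L| ≤ Real.sqrt (((b - a) / (2 * Real.sqrt 3)) ^ 2 * (1 / (b - a) * G - S ^ 2)) :=
        Real.abs_le_sqrt k2
    _ = _ := by rw [Real.sqrt_mul (sq_nonneg _), Real.sqrt_sq hc]
end

section
/- Let f : [a,b] → ℝ be an absolutely continuous mapping whose derivative f′ belongs to L₂[a,b], and suppose φ ≤ f′(t) ≤ Φ for almost every t ∈ [a,b]. Then ((1/(b−a)) ‖f′‖₂² − ((f(b) − f(a))/(b−a))²)^{1/2} ≤ (Φ − φ)/2, and consequently ((b−a)/(2√3)) · ((1/(b−a)) ‖f′‖₂² − ((f(b) − f(a))/(b−a))²)^{1/2} ≤ (b−a)(Φ − φ)/(4√3). -/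
open MeasureTheory Set intervalIntegral

/-- If `f` is absolutely continuous on `[a,b]` with `f' ∈ L₂[a,b]` and
`φ ≤ f' ≤ Φ` a.e. on `[a,b]`, then
`((1/(b−a))‖f'‖₂² − ((f(b)−f(a))/(b−a))²)^{1/2} ≤ (Φ−φ)/2`, and consequently
`((b−a)/(2√3)) ((1/(b−a))‖f'‖₂² − ((f(b)−f(a))/(b−a))²)^{1/2} ≤ (b−a)(Φ−φ)/(4√3)`. -/
theorem L2_bound_by_gruss (a b φ Φ : ℝ) (hab : a < b) (f f' : ℝ → ℝ)
    (hf : ∀ x ∈ Icc a b, f x = f a + ∫ t in a..x, f' t)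
    (hint : IntervalIntegrable f' volume a b)
    (hL2 : IntervalIntegrable (fun t => (f' t) ^ 2) volume a b)
    (hbound : ∀ᵐ t ∂(volume.restrict (Icc a b)), φ ≤ f' t ∧ f' t ≤ Φ) :
    Real.sqrt ((1 / (b - a)) * (∫ t in a..b, (f' t) ^ 2) -
        ((f b - f a) / (b - a)) ^ 2) ≤ (Φ - φ) / 2 ∧
    ((b - a) / (2 * Real.sqrt 3)) *
        Real.sqrt ((1 / (b - a)) * (∫ t in a..b, (f' t) ^ 2) -
          ((f b - f a) / (b - a)) ^ 2) ≤
      (b - a) * (Φ - φ) / (4 * Real.sqrt 3) := by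
  have hba : 0 < b - a := sub_pos.mpr hab
  have hle : φ ≤ Φ := by
    have hne : (volume.restrict (Icc a b)) ≠ 0 := by
      intro h
      have h1 := Measure.restrict_eq_zero.mp h
      rw [Real.volume_Icc, ENNReal.ofReal_eq_zero] at h1
      linarith
    haveI : NeZero (volume.restrict (Icc a b)) := ⟨hne⟩
    obtain ⟨t, h1, h2⟩ := hbound.exists
    exact h1.trans h2
  have hI : f b - f a = ∫ t in a..b, f' t := by
    have := hf b ⟨hab.le, le_rfl⟩
    linarith
  have hg : IntervalIntegrable (fun t => (φ + Φ) * f' t - φ * Φ) volume a b :=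
    (hint.const_mul _).sub intervalIntegrable_const
  have hS : (∫ t in a..b, (f' t) ^ 2) ≤ ∫ t in a..b, ((φ + Φ) * f' t - φ * Φ) := by
    apply integral_mono_ae_restrict hab.le hL2 hg
    filter_upwards [hbound] with t ht
    nlinarith [mul_nonneg (sub_nonneg.mpr ht.1) (sub_nonneg.mpr ht.2)]
  rw [integral_sub (hint.const_mul _) intervalIntegrable_const,
    intervalIntegral.integral_const_mul, intervalIntegral.integral_const, ← hI,
    smul_eq_mul] at hS
  have key : Real.sqrt ((1 / (b - a)) * (∫ t in a..b, (f' t) ^ 2) -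
        ((f b - f a) / (b - a)) ^ 2) ≤ (Φ - φ) / 2 := by
    apply Real.sqrt_le_iff.mpr
    refine ⟨by linarith, ?_⟩
    have h2 := mul_le_mul_of_nonneg_left hS (one_div_pos.mpr hba).le
    have h3 : 1 / (b - a) * ((φ + Φ) * (f b - f a) - (b - a) * (φ * Φ))
        = (φ + Φ) * ((f b - f a) / (b - a)) - φ * Φ := by
      field_simp
    rw [h3] at h2
    nlinarith [sq_nonneg ((f b - f a) / (b - a) - (φ + Φ) / 2)]
  refine ⟨key, ?_⟩
  have h4 := mul_le_mul_of_nonneg_left key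
    (show 0 ≤ (b - a) / (2 * Real.sqrt 3) by positivity)
  refine h4.trans (le_of_eq ?_)
  have : Real.sqrt 3 ≠ 0 := by positivity
  field_simp
  ring
end

section
/- Let a < b, x ∈ [a,b] and α ≥ 1. Then J_a^α(P₂(x,·))(b) = ((b−x)^{1−α}(b−a)^α)/(α(α+1)) − (b−x)/α. -/
open MeasureTheory Set intervalIntegral

/-- The Riemann–Liouville fractional integral of order `α` with base point `a`:
`J_a^α f(x) = (1/Γ(α)) ∫_a^x (x−t)^{α−1} f(t) dt` for `α ≠ 0`, and `J_a^0 f = f`. -/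
noncomputable def RL (a α : ℝ) (f : ℝ → ℝ) (x : ℝ) : ℝ :=
  if α = 0 then f x
  else (1 / Real.Gamma α) * ∫ t in a..x, (x - t) ^ (α - 1) * f t

/-- The fractional Peano kernel:
`P₂(x,t) = ((t−a)/(b−a))(b−x)^{1−α}Γ(α)` for `t < x`, and
`P₂(x,t) = ((t−b)/(b−a))(b−x)^{1−α}Γ(α)` for `x ≤ t`. -/
noncomputable def P2 (a b α x t : ℝ) : ℝ :=
  if t < x then ((t - a) / (b - a)) * (b - x) ^ (1 - α) * Real.Gamma α
  else ((t - b) / (b - a)) * (b - x) ^ (1 - α) * Real.Gamma α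

theorem aux_int (b p q s : ℝ) (hs : 0 ≤ s) :
    ∫ t in p..q, (b - t) ^ s = ((b - p) ^ (s + 1) - (b - q) ^ (s + 1)) / (s + 1) := by
  rw [intervalIntegral.integral_comp_sub_left (fun t => t ^ s) b, integral_rpow (Or.inl (by linarith))]

theorem aux_ii (b p q s : ℝ) (hs : 0 ≤ s) :
    IntervalIntegrable (fun t => (b - t) ^ s) volume p q := by
  apply Continuous.intervalIntegrable
  exact (continuous_const.sub continuous_id).rpow_const (fun _ => Or.inr hs)

/-- For `a < b`, `x ∈ [a,b]` and `α ≥ 1`, the fractional integral of the Peano kernel is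
`J_a^α(P₂(x,·))(b) = ((b−x)^{1−α}(b−a)^α)/(α(α+1)) − (b−x)/α`. -/
theorem RL_P2_eval (a b x α : ℝ) (hab : a < b) (hx : x ∈ Icc a b) (hα : 1 ≤ α) :
    RL a α (fun t => P2 a b α x t) b =
      ((b - x) ^ (1 - α) * (b - a) ^ α) / (α * (α + 1)) - (b - x) / α := by
  obtain ⟨hax, hxb⟩ := hx
  have hα0 : 0 < α := by linarith
  have hG : Real.Gamma α ≠ 0 := (Real.Gamma_pos_of_pos hα0).ne'
  have hba : b - a ≠ 0 := by linarith
  have hs : 0 ≤ α - 1 := by linarith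
  have hpow : ∀ t, t ≤ b → (b - t) ^ α = (b - t) ^ (α - 1) * (b - t) := by
    intro t ht
    rcases ht.eq_or_lt with h | h
    · subst h; simp [hα0.ne']
    · have h' : 0 < b - t := by linarith
      rw [Real.rpow_sub_one h'.ne']; field_simp
  set K := (b - x) ^ (1 - α) * Real.Gamma α / (b - a) with hK
  have e1 : ∀ᵐ t ∂volume, t ∈ uIoc a x → K * ((b - a) * (b - t) ^ (α - 1) - (b - t) ^ α)
      = (b - t) ^ (α - 1) * P2 a b α x t := by
    filter_upwards [compl_mem_ae_iff.mpr (measure_singleton x)] with t ht hm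
    rw [uIoc_of_le hax] at hm
    have hlt : t < x := lt_of_le_of_ne hm.2 ht
    rw [P2, if_pos hlt, hpow t (by linarith), hK]
    field_simp
    ring
  have e2 : ∀ᵐ t ∂volume, t ∈ uIoc x b → K * (-(b - t) ^ α)
      = (b - t) ^ (α - 1) * P2 a b α x t := by
    filter_upwards with t hm
    rw [uIoc_of_le hxb] at hm
    rw [P2, if_neg (not_lt.mpr hm.1.le), hpow t hm.2, hK]
    field_simp
    ring
  have i1 : IntervalIntegrable (fun t => K * ((b - a) * (b - t) ^ (α - 1) - (b - t) ^ α)) volume a x :=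
    (((aux_ii b a x _ hs).const_mul _).sub (aux_ii b a x _ hα0.le)).const_mul _
  have i2 : IntervalIntegrable (fun t => K * (-(b - t) ^ α)) volume x b :=
    ((aux_ii b x b _ hα0.le).neg).const_mul _
  have j1 := i1.congr_ae ((ae_restrict_iff' measurableSet_uIoc).mpr e1)
  have j2 := i2.congr_ae ((ae_restrict_iff' measurableSet_uIoc).mpr e2)
  have hC : (b - x) ^ (1 - α) * (b - x) ^ α = b - x := by
    rcases hxb.eq_or_lt with h | h
    · subst h; simp [hα0.ne']
    · rw [← Real.rpow_add (by linarith)]; simp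
  have hq : ∀ y, y ≤ b → (b - y) ^ (α + 1) = (b - y) ^ α * (b - y) := by
    intro y hy
    rw [Real.rpow_add_one' (by linarith) (by linarith)]
  rw [RL, if_neg hα0.ne', ← integral_add_adjacent_intervals j1 j2,
    ← integral_congr_ae e1, ← integral_congr_ae e2,
    intervalIntegral.integral_const_mul, intervalIntegral.integral_const_mul,
    intervalIntegral.integral_sub ((aux_ii b a x _ hs).const_mul _) (aux_ii b a x _ hα0.le),
    intervalIntegral.integral_const_mul, intervalIntegral.integral_neg,
    aux_int _ _ _ _ hs, aux_int _ _ _ _ hα0.le, aux_int _ _ _ _ hα0.le,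
    hq a hab.le, hq x hxb, hq b le_rfl, sub_add_cancel, hK]
  have hα1 : α + 1 ≠ 0 := by linarith
  have : (b - x) / α = ((b - x) ^ (1 - α) * (b - x) ^ α) / α := by rw [hC]
  rw [this]
  generalize (b - x) ^ (1 - α) = C
  generalize (b - x) ^ α = D
  generalize (b - a) ^ α = E
  field_simp
  ring
end

section
/- Let f : [a,b] → ℝ be differentiable with f′ integrable on [a,b], and suppose φ ≤ f′(t) ≤ Φ for almost every t ∈ (a,b). Then 0 ≤ (1/(b−a)) ∫_a^b (f′(t))² dt − ((1/(b−a)) ∫_a^b f′(t) dt)² ≤ (1/4)(Φ − φ)². -/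
open MeasureTheory Set intervalIntegral

/-- **Grüss bound for the derivative.** If `f` is differentiable with `f'` integrable on
`[a,b]` and `φ ≤ f' ≤ Φ` a.e. on `(a,b)`, then
`0 ≤ (1/(b−a)) ∫_a^b f'² − ((1/(b−a)) ∫_a^b f')² ≤ (1/4)(Φ−φ)²`. -/
theorem gruss_derivative_bound (a b φ Φ : ℝ) (hab : a < b) (f f' : ℝ → ℝ)
    (hderiv : ∀ x ∈ Icc a b, HasDerivAt f (f' x) x)
    (hint : IntervalIntegrable f' volume a b)
    (hbound : ∀ᵐ t ∂(volume.restrict (Ioo a b)), φ ≤ f' t ∧ f' t ≤ Φ) :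
    0 ≤ (1 / (b - a)) * (∫ t in a..b, (f' t) ^ 2) -
        ((1 / (b - a)) * ∫ t in a..b, f' t) ^ 2 ∧
      (1 / (b - a)) * (∫ t in a..b, (f' t) ^ 2) -
        ((1 / (b - a)) * ∫ t in a..b, f' t) ^ 2 ≤ (1 / 4) * (Φ - φ) ^ 2 := by
  have hb : ∀ᵐ t ∂(volume.restrict (Ioc a b)), φ ≤ f' t ∧ f' t ≤ Φ := by
    rw [← Measure.restrict_congr_set (Ioo_ae_eq_Ioc (μ := volume) (a := a) (b := b))]
    exact hbound
  have hi : IntegrableOn f' (Ioc a b) volume := (intervalIntegrable_iff_integrableOn_Ioc_of_le hab.le).1 hint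
  have hsq : IntervalIntegrable (fun t => (f' t) ^ 2) volume a b := by
    rw [intervalIntegrable_iff_integrableOn_Ioc_of_le hab.le]
    have h := Integrable.bdd_mul (c := max |φ| |Φ|) hi hi.aestronglyMeasurable (by
      filter_upwards [hb] with t ht
      exact abs_le_max_abs_abs ht.1 ht.2)
    simpa only [IntegrableOn, sq] using h
  have hL : 0 < b - a := sub_pos.2 hab
  have key : ∀ p q : ℝ, ∫ t in a..b, ((f' t) ^ 2 + (p * f' t + q)) =
      (∫ t in a..b, (f' t) ^ 2) + (p * (∫ t in a..b, f' t) + q * (b - a)) := by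
    intro p q
    rw [intervalIntegral.integral_add hsq ((hint.const_mul p).add intervalIntegrable_const),
      intervalIntegral.integral_add (hint.const_mul p) intervalIntegrable_const,
      intervalIntegral.integral_const_mul, intervalIntegral.integral_const, smul_eq_mul]
    ring
  obtain ⟨m, hm⟩ : ∃ m, m = (1 / (b - a)) * ∫ t in a..b, f' t := ⟨_, rfl⟩
  have hI : ∫ t in a..b, f' t = m * (b - a) := by rw [hm]; field_simp
  have h1 : 0 ≤ ∫ t in a..b, ((f' t) ^ 2 + ((-2 * m) * f' t + m ^ 2)) := by
    apply intervalIntegral.integral_nonneg hab.le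
    intro t _
    nlinarith [sq_nonneg (f' t - m)]
  have h2 : ∫ t in a..b, ((f' t) ^ 2 + ((-(Φ + φ)) * f' t + φ * Φ)) ≤ 0 := by
    rw [intervalIntegral.integral_of_le hab.le]
    apply integral_nonpos_of_ae
    filter_upwards [hb] with t ht
    have := mul_nonneg (sub_nonneg.2 ht.1) (sub_nonneg.2 ht.2)
    simp only [Pi.zero_apply]
    nlinarith
  rw [key, hI] at h1 h2
  rw [← hm]
  obtain ⟨s, hs⟩ : ∃ s, s = (1 / (b - a)) * ∫ t in a..b, (f' t) ^ 2 := ⟨_, rfl⟩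
  have hS : ∫ t in a..b, (f' t) ^ 2 = s * (b - a) := by rw [hs]; field_simp
  rw [← hs]
  rw [hS] at h1 h2
  have h1' : 0 ≤ s - m ^ 2 := by
    refine nonneg_of_mul_nonneg_left (b := b - a) ?_ hL
    linarith
  have h2' : 0 ≤ (Φ + φ) * m - φ * Φ - s := by
    refine nonneg_of_mul_nonneg_left (b := b - a) ?_ hL
    linarith
  exact ⟨h1', by nlinarith [sq_nonneg (m - (Φ + φ) / 2)]⟩
end

section
/- Let f : I ⊆ ℝ → ℝ be a differentiable mapping on the interior I° of I, a, b ∈ I° with a < b, f′ ∈ L₂[a,b], and suppose f′ is bounded on (a,b) with φ ≤ f′(x) ≤ Φ. Then for all x ∈ [a,b] and α ≥ 1, (b−a) (K(x))^{1/2} ( (1/((b−a)Γ²(α))) ‖f′‖₂² − ((f(b)−f(a))/((b−a)Γ(α)))² )^{1/2} ≤ ((K(x))^{1/2}/(2Γ(α))) (b−a)(Φ − φ), where K(x) = (b−x)^{1−α}(b−a)^{2α−2}(1/(2α+1) + 1/(2α−1) − 1/α) + ((b−x)^α/(b−a)²)((b−x)/α − (b−a)/(2α−1)) − ( ((b−x)^{1−α}(b−a)^{α−1})/(α(α+1))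 − (b−x)/(α(b−a)) )². -/
open MeasureTheory Set intervalIntegral

/-- The quantity `K(x)` appearing in the main theorem. -/
noncomputable def K (a b α x : ℝ) : ℝ :=
  (b - x) ^ (1 - α) * (b - a) ^ (2 * α - 2) *
      (1 / (2 * α + 1) + 1 / (2 * α - 1) - 1 / α)
    + ((b - x) ^ α / (b - a) ^ 2) * ((b - x) / α - (b - a) / (2 * α - 1))
    - (((b - x) ^ (1 - α) * (b - a) ^ (α - 1)) / (α * (α + 1))
        - (b - x) / (α * (b - a))) ^ 2

/-- **Main theorem, second inequality.** Under the same hypotheses, the `L₂`-type bound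
is itself bounded by `(K(x)^{1/2}/(2Γ(α))) (b−a)(Φ−φ)`. -/
theorem main_theorem_second (I : Set ℝ) (hIconn : I.OrdConnected)
    (a b φ Φ : ℝ) (ha : a ∈ interior I) (hb : b ∈ interior I) (hab : a < b)
    (f f' : ℝ → ℝ) (hderiv : ∀ y ∈ interior I, HasDerivAt f (f' y) y)
    (hL2 : IntervalIntegrable (fun t => (f' t) ^ 2) volume a b)
    (hbound : ∀ x ∈ Ioo a b, φ ≤ f' x ∧ f' x ≤ Φ) :
    ∀ x ∈ Icc a b, ∀ α : ℝ, 1 ≤ α →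
      (b - a) * Real.sqrt (K a b α x) *
          Real.sqrt ((1 / ((b - a) * Real.Gamma α ^ 2)) * (∫ t in a..b, (f' t) ^ 2) -
            ((f b - f a) / ((b - a) * Real.Gamma α)) ^ 2) ≤
        (Real.sqrt (K a b α x) / (2 * Real.Gamma α)) * (b - a) * (Φ - φ) := by
  intro x hx α hα
  have hG : 0 < Real.Gamma α := Real.Gamma_pos_of_pos (by linarith)
  have hL : 0 < b - a := by linarith
  have hsub : Icc a b ⊆ interior I := hIconn.interior.out ha hb
  have hint : IntervalIntegrable f' volume a b := by
    rw [intervalIntegrable_iff_integrableOn_Ioc_of_le hab.le] at hL2 ⊢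
    have hm : AEStronglyMeasurable f' (volume.restrict (Ioc a b)) := by
      refine (measurable_deriv f).aestronglyMeasurable.congr ?_
      filter_upwards [ae_restrict_mem measurableSet_Ioc] with t ht
      exact (hderiv t (hsub (Ioc_subset_Icc_self ht))).deriv
    have h1 : IntegrableOn (fun t => 1 + (f' t) ^ 2) (Ioc a b) volume :=
      (integrableOn_const (by simp)).add hL2
    refine Integrable.mono' h1 hm ?_
    filter_upwards with t
    rw [Real.norm_eq_abs, abs_le]
    constructor <;> nlinarith [sq_nonneg (f' t - 1), sq_nonneg (f' t + 1)]
  have hftc : ∫ t in a..b, f' t = f b - f a :=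
    integral_eq_sub_of_hasDerivAt
      (fun t ht => hderiv t (hsub (by rwa [uIcc_of_le hab.le] at ht))) hint
  have hle : ∫ t in a..b, (f' t) ^ 2 ≤ ∫ t in a..b, ((φ + Φ) * f' t - φ * Φ) := by
    refine integral_mono_on_of_le_Ioo hab.le hL2 ((hint.const_mul _).sub (by simp)) ?_
    intro t ht
    obtain ⟨h1, h2⟩ := hbound t ht
    nlinarith [mul_nonneg (sub_nonneg.2 h1) (sub_nonneg.2 h2)]
  rw [intervalIntegral.integral_sub (hint.const_mul _) (by simp),
    intervalIntegral.integral_const_mul, hftc, intervalIntegral.integral_const, smul_eq_mul] at hle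
  have hphi : φ ≤ Φ := by
    obtain ⟨h1, h2⟩ := hbound ((a + b) / 2) ⟨by linarith, by linarith⟩
    linarith
  have key : Real.sqrt ((1 / ((b - a) * Real.Gamma α ^ 2)) * (∫ t in a..b, (f' t) ^ 2) -
            ((f b - f a) / ((b - a) * Real.Gamma α)) ^ 2) ≤ (Φ - φ) / (2 * Real.Gamma α) := by
    apply Real.sqrt_le_iff.2
    refine ⟨div_nonneg (by linarith) (by linarith), ?_⟩
    generalize (∫ t in a..b, (f' t) ^ 2) = S at *
    generalize f b - f a = D at *
    generalize b - a = L at *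
    generalize Real.Gamma α = G at *
    have e : (1 / (L * G ^ 2)) * S - (D / (L * G)) ^ 2 = (S * L - D ^ 2) / (L * G) ^ 2 := by
      field_simp
    have e2 : ((Φ - φ) / (2 * G)) ^ 2 = ((Φ - φ) ^ 2 * L ^ 2 / 4) / (L * G) ^ 2 := by
      field_simp
      norm_num
    rw [e, e2]
    gcongr
    nlinarith [mul_le_mul_of_nonneg_right hle hL.le, sq_nonneg (2 * D - (φ + Φ) * L)]
  calc _ ≤ (b - a) * Real.sqrt (K a b α x) * ((Φ - φ) / (2 * Real.Gamma α)) := by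
        gcongr
    _ = _ := by ring
end

section
/- Let f : I ⊆ ℝ → ℝ be a differentiable mapping on the interior I° of I, a, b ∈ I° with a < b, f′ ∈ L₂[a,b], and suppose f′ is bounded on (a,b) with φ ≤ f′(x) ≤ Φ. Then for all x ∈ [a,b], |f(x) − (1/(b−a)) ∫_a^b f(t) dt − ((f(b)−f(a))/(b−a))(x − (a+b)/2)| ≤ ((b−a)/(2√3)) ( (1/(b−a)) ‖f′‖₂² − ((f(b)−f(a))/(b−a))² )^{1/2} ≤ (b−a)(Φ − φ)/(4√3). -/
open MeasureTheory Set intervalIntegral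

theorem aux_piece (f f' : ℝ → ℝ) (u v k m s : ℝ) (huv : u ≤ v)
    (hd : ∀ y ∈ Icc u v, HasDerivAt f (f' y) y)
    (h1 : IntervalIntegrable f' volume u v)
    (h2 : IntervalIntegrable (fun t => (f' t) ^ 2) volume u v) :
    0 ≤ s^2 * ((v-k)^3 - (u-k)^3)/3 + (∫ t in u..v, (f' t)^2) - 2*m*(f v - f u) + m^2*(v-u)
      + 2*s*((v-k)*f v - (u-k)*f u - (∫ t in u..v, f t) - m*((v-k)^2-(u-k)^2)/2) := by
  have hc : ContinuousOn f (uIcc u v) := by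
    rw [uIcc_of_le huv]
    exact fun y hy => (hd y hy).continuousAt.continuousWithinAt
  have h0 : IntervalIntegrable f volume u v := hc.intervalIntegrable
  have hG : ∀ y ∈ uIcc u v, HasDerivAt (fun t => s^2*(t-k)^3/3 - 2*m*f t + m^2*t
      + 2*s*((t-k)*f t) - s*m*(t-k)^2)
      ((s^2*(y-k)^2 + m^2 - 2*s*m*(y-k)) + (2*s*(y-k) - 2*m)*f' y + 2*s*f y) y := by
    intro y hy
    rw [uIcc_of_le huv] at hy
    have hf := hd y hy
    have hl : HasDerivAt (fun t : ℝ => t - k) 1 y := (hasDerivAt_id y).sub_const k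
    have := ((((((hl.pow 3).const_mul (s^2)).div_const 3).sub (hf.const_mul (2*m))).add
      ((hasDerivAt_id y).const_mul (m^2))).add ((hl.mul hf).const_mul (2*s))).sub
      ((hl.pow 2).const_mul (s*m))
    refine this.congr_deriv ?_
    simp
    ring
  have hi : IntervalIntegrable (fun y => (s^2*(y-k)^2 + m^2 - 2*s*m*(y-k))
      + (2*s*(y-k) - 2*m)*f' y + 2*s*f y) volume u v := by
    refine IntervalIntegrable.add (IntervalIntegrable.add ?_ ?_) (h0.const_mul _)
    · exact Continuous.intervalIntegrable (by fun_prop) _ _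
    · exact h1.continuousOn_mul (by fun_prop)
  have hF := integral_eq_sub_of_hasDerivAt hG hi
  have hn : 0 ≤ ∫ t in u..v, (s*(t-k) + f' t - m)^2 :=
    integral_nonneg huv (fun t _ => sq_nonneg _)
  have he : ∫ t in u..v, (s*(t-k) + f' t - m)^2 = (∫ y in u..v, ((s^2*(y-k)^2 + m^2 - 2*s*m*(y-k))
      + (2*s*(y-k) - 2*m)*f' y + 2*s*f y)) + (∫ t in u..v, (f' t)^2) - 2*s*∫ t in u..v, f t := by
    rw [← intervalIntegral.integral_const_mul, ← intervalIntegral.integral_add hi h2,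
      ← intervalIntegral.integral_sub (hi.add h2) (h0.const_mul _)]
    congr 1
    ext t
    ring
  rw [he, hF] at hn
  linarith

/-- **Corollary (α = 1) of the main theorem.** For `f` differentiable on the interior of
`I`, `a, b ∈ I°`, `a < b`, `f' ∈ L₂[a,b]`, `f'` bounded on `(a,b)` by `φ ≤ f' ≤ Φ`:
for all `x ∈ [a,b]`,
`|f(x) − (1/(b−a))∫_a^b f − ((f(b)−f(a))/(b−a))(x−(a+b)/2)|
  ≤ ((b−a)/(2√3)) ((1/(b−a))‖f'‖₂² − ((f(b)−f(a))/(b−a))²)^{1/2}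
  ≤ (b−a)(Φ−φ)/(4√3)`. -/
theorem main_corollary_alpha_one (I : Set ℝ) (hIconn : I.OrdConnected)
    (a b φ Φ : ℝ) (ha : a ∈ interior I) (hb : b ∈ interior I) (hab : a < b)
    (f f' : ℝ → ℝ) (hderiv : ∀ y ∈ interior I, HasDerivAt f (f' y) y)
    (hL2 : IntervalIntegrable (fun t => (f' t) ^ 2) volume a b)
    (hbound : ∀ x ∈ Ioo a b, φ ≤ f' x ∧ f' x ≤ Φ) :
    ∀ x ∈ Icc a b,
      |f x - (1 / (b - a)) * (∫ t in a..b, f t) -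
          ((f b - f a) / (b - a)) * (x - (a + b) / 2)| ≤
        ((b - a) / (2 * Real.sqrt 3)) *
          Real.sqrt ((1 / (b - a)) * (∫ t in a..b, (f' t) ^ 2) -
            ((f b - f a) / (b - a)) ^ 2) ∧
      ((b - a) / (2 * Real.sqrt 3)) *
          Real.sqrt ((1 / (b - a)) * (∫ t in a..b, (f' t) ^ 2) -
            ((f b - f a) / (b - a)) ^ 2) ≤
        (b - a) * (Φ - φ) / (4 * Real.sqrt 3) := by
  intro x hx
  have hsub : Icc a b ⊆ interior I := hIconn.interior.out ha hb
  have hd : ∀ y ∈ Icc a b, HasDerivAt f (f' y) y := fun y hy => hderiv y (hsub hy)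
  have hab' := hab.le
  have hL : 0 < b - a := sub_pos.2 hab
  have h1 : IntervalIntegrable f' volume a b := by
    have : IntervalIntegrable (fun y => f' y - φ) volume a b := by
      apply intervalIntegrable_deriv_of_nonneg (g := fun y => f y - φ * y)
      · rw [uIcc_of_le hab']
        intro y hy
        exact ((hd y hy).continuousAt.sub (by fun_prop)).continuousWithinAt
      · rw [min_eq_left hab', max_eq_right hab']
        intro y hy
        have := (hd y (Ioo_subset_Icc_self hy)).sub ((hasDerivAt_id y).const_mul φ)
        exact this.congr_deriv (by simp)
      · rw [min_eq_left hab', max_eq_right hab']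
        intro y hy
        linarith [(hbound y hy).1]
    have h := this.add (intervalIntegrable_const (c := φ))
    refine h.congr ?_
    intro y _
    simp
  have h0 : IntervalIntegrable f volume a b := by
    apply ContinuousOn.intervalIntegrable
    rw [uIcc_of_le hab']
    exact fun y hy => (hd y hy).continuousAt.continuousWithinAt
  have s1 : uIcc a x ⊆ uIcc a b := by
    rw [uIcc_of_le hab', uIcc_of_le hx.1]; exact Icc_subset_Icc_right hx.2
  have s2 : uIcc x b ⊆ uIcc a b := by
    rw [uIcc_of_le hab', uIcc_of_le hx.2]; exact Icc_subset_Icc_left hx.1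
  have a1 := integral_add_adjacent_intervals (h0.mono_set s1) (h0.mono_set s2)
  have a2 := integral_add_adjacent_intervals (hL2.mono_set s1) (hL2.mono_set s2)
  have FT : ∫ t in a..b, f' t = f b - f a :=
    integral_eq_sub_of_hasDerivAt (by rw [uIcc_of_le hab']; exact hd) h1
  obtain ⟨m, hm⟩ : ∃ m, m = (f b - f a) / (b - a) := ⟨_, rfl⟩
  have hm' : f b - f a = m * (b - a) := by rw [hm]; field_simp
  obtain ⟨J, hJ⟩ : ∃ J, J = ∫ t in a..b, f t := ⟨_, rfl⟩
  obtain ⟨Q, hQ⟩ : ∃ Q, Q = ∫ t in a..b, (f' t)^2 := ⟨_, rfl⟩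
  rw [← hm, ← hJ, ← hQ]
  obtain ⟨E, hE⟩ : ∃ E, E = f x - 1 / (b - a) * J - m * (x - (a + b) / 2) := ⟨_, rfl⟩
  have hE' : (b - a) * E = (b - a) * f x - J - (b - a) * m * (x - (a + b) / 2) := by
    rw [hE]; field_simp
  rw [← hE]
  have key : ∀ s : ℝ, 0 ≤ s^2 * (b-a)^3/12 + 2*s*((b-a)*E) + (Q - (b-a)*m^2) := by
    intro s
    have p1 := aux_piece f f' a x (a + (x - (a+b)/2)) m s hx.1
      (fun y hy => hd y ⟨hy.1, hy.2.trans hx.2⟩) (h1.mono_set s1) (hL2.mono_set s1)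
    have p2 := aux_piece f f' x b (b + (x - (a+b)/2)) m s hx.2
      (fun y hy => hd y ⟨hx.1.trans hy.1, hy.2⟩) (h1.mono_set s2) (hL2.mono_set s2)
    have := add_nonneg p1 p2
    rw [hE', hJ, hQ, ← a1, ← a2]
    have hfb : f b = f a + m * (b - a) := by linarith
    rw [hfb] at this
    refine this.trans (le_of_eq ?_)
    ring
  obtain ⟨W, hW⟩ : ∃ W, W = 1 / (b - a) * Q - m^2 := ⟨_, rfl⟩
  have hW' : Q - (b-a)*m^2 = (b-a) * W := by rw [hW]; field_simp
  rw [← hW]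
  have k1 : E^2 ≤ (b-a)^2/12 * W := by
    have h := key (-12*E/(b-a)^2)
    rw [hW'] at h
    have e : (-12*E/(b-a)^2)^2 * (b-a)^3/12 + 2*(-12*E/(b-a)^2)*((b-a)*E) + (b-a)*W
      = (12/(b-a)) * ((b-a)^2/12*W - E^2) := by
      field_simp; ring
    rw [e] at h
    have := nonneg_of_mul_nonneg_right h (by positivity)
    linarith
  have hφΦ : φ ≤ Φ := by
    have := hbound ((a+b)/2) ⟨by linarith, by linarith⟩
    linarith
  have k2 : W ≤ ((Φ - φ)/2)^2 := by
    have hle : Q ≤ ∫ t in a..b, ((Φ+φ) * f' t - Φ*φ) := by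
      rw [hQ]
      refine integral_mono_on_of_le_Ioo hab' hL2
        ((h1.const_mul _).sub intervalIntegrable_const) ?_
      intro t ht
      obtain ⟨q1, q2⟩ := hbound t ht
      nlinarith [mul_nonneg (sub_nonneg.2 q1) (sub_nonneg.2 q2)]
    rw [intervalIntegral.integral_sub (h1.const_mul _) intervalIntegrable_const,
      intervalIntegral.integral_const_mul, FT, hm', intervalIntegral.integral_const,
      smul_eq_mul] at hle
    have : (b-a) * W ≤ (b-a) * ((Φ+φ)*m - Φ*φ - m^2) := by linarith
    have := le_of_mul_le_mul_left this hL
    nlinarith [sq_nonneg (m - (Φ+φ)/2)]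
  have h3 : 0 < Real.sqrt 3 := by positivity
  have h33 : Real.sqrt 3 ^ 2 = 3 := Real.sq_sqrt (by norm_num)
  have hW0 : 0 ≤ W := by
    have : 0 ≤ (b-a)^2/12 * W := (sq_nonneg E).trans k1
    exact nonneg_of_mul_nonneg_right this (by positivity)
  constructor
  · apply abs_le_of_sq_le_sq _ (by positivity)
    refine k1.trans (le_of_eq ?_)
    rw [mul_pow, div_pow, mul_pow, h33, Real.sq_sqrt hW0]
    ring
  · have : Real.sqrt W ≤ (Φ - φ)/2 := Real.sqrt_le_iff.2 ⟨by linarith, k2⟩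
    calc _ ≤ (b - a) / (2 * Real.sqrt 3) * ((Φ - φ)/2) := by gcongr
      _ = _ := by field_simp; ring
end

section
/- Let f : I ⊆ ℝ → ℝ be a differentiable mapping on the interior I° of I, a, b ∈ I° with a < b, f′ ∈ L₂[a,b], and suppose f′ is bounded on (a,b) with φ ≤ f′(x) ≤ Φ. Then |f((a+b)/2) − (1/(b−a)) ∫_a^b f(t) dt| ≤ ((b−a)/(2√3)) ( (1/(b−a)) ‖f′‖₂² − ((f(b)−f(a))/(b−a))² )^{1/2} ≤ (b−a)(Φ − φ)/(4√3). -/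
open MeasureTheory Set intervalIntegral

theorem aux_quad (f f' : ℝ → ℝ) (u v c l k : ℝ) (huv : u ≤ v)
    (hd : ∀ y ∈ Icc u v, HasDerivAt f (f' y) y)
    (h1 : IntervalIntegrable f' volume u v)
    (h2 : IntervalIntegrable (fun t => (f' t) ^ 2) volume u v) :
    0 ≤ (∫ t in u..v, (f' t) ^ 2) + 2 * l * (∫ t in u..v, f t)
      + ((-2 * c * f v - 2 * l * (v - k) * f v + c ^ 2 * v + c * l * (v - k) ^ 2
          + l ^ 2 * (v - k) ^ 3 / 3)
        - (-2 * c * f u - 2 * l * (u - k) * f u + c ^ 2 * u + c * l * (u - k) ^ 2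
          + l ^ 2 * (u - k) ^ 3 / 3)) := by
  have hfc : ContinuousOn f (uIcc u v) := by
    rw [uIcc_of_le huv]
    exact fun y hy => (hd y hy).continuousAt.continuousWithinAt
  have hfi : IntervalIntegrable f volume u v := hfc.intervalIntegrable
  have e1 : IntervalIntegrable (fun t => (-2 * c - 2 * l * (t - k)) * f' t) volume u v :=
    h1.continuousOn_mul (by fun_prop)
  have e2 : IntervalIntegrable (fun t => - (2 * l) * f t) volume u v := hfi.const_mul _
  have e3 : IntervalIntegrable (fun t : ℝ => (c + l * (t - k)) ^ 2) volume u v :=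
    Continuous.intervalIntegrable (by fun_prop) _ _
  have e4 : IntervalIntegrable (fun t => (-2 * c - 2 * l * (t - k)) * f' t + - (2 * l) * f t
    + (c + l * (t - k)) ^ 2) volume u v := (e1.add e2).add e3
  have ftc := integral_eq_sub_of_hasDerivAt
    (f := fun t => -2 * c * f t - 2 * l * (t - k) * f t + c ^ 2 * t + c * l * (t - k) ^ 2
          + l ^ 2 * (t - k) ^ 3 / 3) (a := u) (b := v)
    (f' := fun t => (-2 * c - 2 * l * (t - k)) * f' t + - (2 * l) * f t
      + (c + l * (t - k)) ^ 2) (fun y hy => by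
      rw [uIcc_of_le huv] at hy
      have hf := hd y hy
      have hk : HasDerivAt (fun t : ℝ => t - k) 1 y := (hasDerivAt_id y).sub_const k
      have := (((((hf.const_mul (-2 * c)).sub ((hk.const_mul (2 * l)).mul hf)).add
        ((hasDerivAt_id y).const_mul (c ^ 2))).add ((hk.pow 2).const_mul (c * l))).add
        (((hk.pow 3).const_mul (l ^ 2)).div_const 3))
      refine this.congr_deriv ?_
      simp
      ring) e4
  have hpos : 0 ≤ ∫ t in u..v, (f' t - (c + l * (t - k))) ^ 2 :=
    integral_nonneg huv (fun t _ => sq_nonneg _)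
  have heq : (∫ t in u..v, (f' t - (c + l * (t - k))) ^ 2) =
      ∫ t in u..v, (((f' t) ^ 2 + (2 * l) * f t) +
        ((-2 * c - 2 * l * (t - k)) * f' t + - (2 * l) * f t + (c + l * (t - k)) ^ 2)) := by
    congr 1
    ext t
    ring
  rw [heq, integral_add (h2.add (hfi.const_mul _)) e4, ftc,
    integral_add h2 (hfi.const_mul _), intervalIntegral.integral_const_mul] at hpos
  exact hpos

/-- **Midpoint specialization of the α = 1 corollary.** For `f` differentiable on the
interior of `I`, `a, b ∈ I°`, `a < b`, `f' ∈ L₂[a,b]`, `f'` bounded on `(a,b)` by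
`φ ≤ f' ≤ Φ`:
`|f((a+b)/2) − (1/(b−a))∫_a^b f|
  ≤ ((b−a)/(2√3)) ((1/(b−a))‖f'‖₂² − ((f(b)−f(a))/(b−a))²)^{1/2}
  ≤ (b−a)(Φ−φ)/(4√3)`. -/
theorem midpoint_corollary (I : Set ℝ) (hIconn : I.OrdConnected)
    (a b φ Φ : ℝ) (ha : a ∈ interior I) (hb : b ∈ interior I) (hab : a < b)
    (f f' : ℝ → ℝ) (hderiv : ∀ y ∈ interior I, HasDerivAt f (f' y) y)
    (hL2 : IntervalIntegrable (fun t => (f' t) ^ 2) volume a b)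
    (hbound : ∀ x ∈ Ioo a b, φ ≤ f' x ∧ f' x ≤ Φ) :
    |f ((a + b) / 2) - (1 / (b - a)) * ∫ t in a..b, f t| ≤
        ((b - a) / (2 * Real.sqrt 3)) *
          Real.sqrt ((1 / (b - a)) * (∫ t in a..b, (f' t) ^ 2) -
            ((f b - f a) / (b - a)) ^ 2) ∧
      ((b - a) / (2 * Real.sqrt 3)) *
          Real.sqrt ((1 / (b - a)) * (∫ t in a..b, (f' t) ^ 2) -
            ((f b - f a) / (b - a)) ^ 2) ≤
        (b - a) * (Φ - φ) / (4 * Real.sqrt 3) := by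
  have hsub : Icc a b ⊆ interior I := hIconn.interior.out ha hb
  have hd : ∀ y ∈ Icc a b, HasDerivAt f (f' y) y := fun y hy => hderiv y (hsub hy)
  have h1 : IntervalIntegrable f' volume a b := by
    rw [intervalIntegrable_iff_integrableOn_Ioo_of_le hab.le]
    have hm : IntegrableOn (deriv f) (Ioo a b) volume := by
      refine Measure.integrableOn_of_bounded (M := max |φ| |Φ|) (by simp)
        (measurable_deriv f).aestronglyMeasurable ?_
      refine (ae_restrict_iff' measurableSet_Ioo).2 (Filter.Eventually.of_forall fun x hx => ?_)
      rw [(hd x (Ioo_subset_Icc_self hx)).deriv, Real.norm_eq_abs]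
      exact abs_le_max_abs_abs (hbound x hx).1 (hbound x hx).2
    exact hm.congr_fun (fun x hx => (hd x (Ioo_subset_Icc_self hx)).deriv) measurableSet_Ioo
  have hI : ∫ t in a..b, f' t = f b - f a :=
    integral_eq_sub_of_hasDerivAt (by rw [uIcc_of_le hab.le]; exact hd) h1
  have hfi : IntervalIntegrable f volume a b := by
    apply ContinuousOn.intervalIntegrable
    rw [uIcc_of_le hab.le]
    exact fun y hy => (hd y hy).continuousAt.continuousWithinAt
  obtain ⟨m, hm⟩ : ∃ m, m = (a + b) / 2 := ⟨_, rfl⟩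
  have ham : a ≤ m := by linarith
  have hmb : m ≤ b := by linarith
  have s1 : uIcc a m ⊆ uIcc a b := by
    rw [uIcc_of_le ham, uIcc_of_le hab.le]; exact Icc_subset_Icc le_rfl hmb
  have s2 : uIcc m b ⊆ uIcc a b := by
    rw [uIcc_of_le hmb, uIcc_of_le hab.le]; exact Icc_subset_Icc ham le_rfl
  have q : ∀ c l : ℝ, _ := fun c l => add_nonneg
    (aux_quad f f' a m c l a ham (fun y hy => hd y ⟨hy.1, hy.2.trans hmb⟩)
      (h1.mono_set s1) (hL2.mono_set s1))
    (aux_quad f f' m b c l b hmb (fun y hy => hd y ⟨ham.trans hy.1, hy.2⟩)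
      (h1.mono_set s2) (hL2.mono_set s2))
  have a1 := integral_add_adjacent_intervals (hL2.mono_set s1) (hL2.mono_set s2)
  have a2 := integral_add_adjacent_intervals (hfi.mono_set s1) (hfi.mono_set s2)
  have hup : 0 ≤ ∫ t in a..b, ((Φ + φ) * f' t - Φ * φ - (f' t) ^ 2) := by
    rw [integral_of_le hab.le, integral_Ioc_eq_integral_Ioo]
    refine setIntegral_nonneg measurableSet_Ioo fun x hx => ?_
    nlinarith [mul_nonneg (sub_nonneg.2 (hbound x hx).1) (sub_nonneg.2 (hbound x hx).2)]
  rw [integral_sub ((h1.const_mul _).sub intervalIntegrable_const) hL2,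
    integral_sub (h1.const_mul _) intervalIntegrable_const,
    intervalIntegral.integral_const_mul, hI, intervalIntegral.integral_const,
    smul_eq_mul] at hup
  rw [← hm]
  generalize (∫ t in a..b, (f' t) ^ 2) = S at *
  generalize (∫ t in a..b, f t) = F at *
  obtain ⟨h, hh⟩ : ∃ h, h = b - a := ⟨_, rfl⟩
  have hpos : 0 < h := by linarith
  obtain ⟨c, hc⟩ : ∃ c, c = (f b - f a) / h := ⟨_, rfl⟩
  have hc' : f b - f a = c * h := by rw [hc]; field_simp
  obtain ⟨s, hs⟩ : ∃ s, s = 1 / h * S := ⟨_, rfl⟩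
  have hS : S = s * h := by rw [hs]; field_simp
  obtain ⟨E, hE⟩ : ∃ E, E = f m - 1 / h * F := ⟨_, rfl⟩
  have hF : F = h * (f m - E) := by rw [hE]; field_simp; ring
  rw [← hh, ← hc, ← hs, ← hE]
  have hb' : b = a + h := by linarith
  have hm' : m = a + h / 2 := by rw [hm, hb']; ring
  have hfb : f b = f a + c * h := by linarith
  have q1 : ∀ l : ℝ, 0 ≤ h * (s - c ^ 2 - 2 * l * E + l ^ 2 * h ^ 2 / 12) := by
    intro l
    have := q c l
    have e1 : m - a = h / 2 := by linarith
    have e2 : m - b = - (h / 2) := by linarith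
    rw [e1, e2, sub_self, sub_self, hfb] at this
    have e3 : c ^ 2 * b = c ^ 2 * a + c ^ 2 * h := by rw [hb']; ring
    rw [e3] at this
    have a2' : 2 * l * (∫ t in a..m, f t) + 2 * l * (∫ t in m..b, f t)
        = 2 * l * (h * (f m - E)) := by rw [← mul_add, a2, hF]
    nlinarith
  have q2 : E ^ 2 ≤ h ^ 2 / 12 * (s - c ^ 2) := by
    have := nonneg_of_mul_nonneg_right (q1 (12 * E / h ^ 2)) hpos
    have e : s - c ^ 2 - 2 * (12 * E / h ^ 2) * E + (12 * E / h ^ 2) ^ 2 * h ^ 2 / 12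
      = s - c ^ 2 - 12 * E ^ 2 / h ^ 2 := by field_simp; ring
    rw [e, sub_nonneg, div_le_iff₀ (by positivity)] at this
    linarith
  have hle : φ ≤ Φ := by
    have := hbound m ⟨by linarith, by linarith⟩
    linarith
  have q3 : s - c ^ 2 ≤ ((Φ - φ) / 2) ^ 2 := by
    have : 0 ≤ h * ((Φ + φ) * c - Φ * φ - s) := by
      rw [hc', hS, ← hh] at hup
      linarith
    have := nonneg_of_mul_nonneg_right this hpos
    nlinarith [sq_nonneg (c - (Φ + φ) / 2)]
  have h3 : Real.sqrt 3 ^ 2 = 3 := Real.sq_sqrt (by norm_num)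
  have h3p : 0 < Real.sqrt 3 := by positivity
  constructor
  · have hsnn : 0 ≤ s - c ^ 2 := by
      have := nonneg_of_mul_nonneg_right (q1 0) hpos
      linarith
    refine abs_le_of_sq_le_sq ?_ (by positivity)
    rw [mul_pow, Real.sq_sqrt hsnn, div_pow, mul_pow, h3]
    linarith
  · have : Real.sqrt (s - c ^ 2) ≤ (Φ - φ) / 2 :=
      Real.sqrt_le_iff.2 ⟨by linarith, q3⟩
    calc h / (2 * Real.sqrt 3) * Real.sqrt (s - c ^ 2)
        ≤ h / (2 * Real.sqrt 3) * ((Φ - φ) / 2) := by gcongr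
      _ = h * (Φ - φ) / (4 * Real.sqrt 3) := by field_simp; ring
end
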